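/- For every θ ∈ Θ_M° and all i,j ∈ {1,…,4}, the Fisher information entry I_{θiθj}(θ) = ∫_ℝ (f_{θi}(x;θ) f_{θj}(x;θ) / f(x;θ)) dx is well-defined and finite (the integrand is absolutely integrable), and each entry is a continuous function of θ on Θ_M°. -/

import Mathlib

open MeasureTheory Filter

noncomputable section

def ThetaInt : Set (Fin 4 → ℝ) :=
  {θ | 0 < θ 1 ∧ θ 2 ∈ Set.Ioo (0:ℝ) 2 ∧ θ 3 ∈ Set.Ioo (-1:ℝ) 1}

/-- Cumulant (log characteristic function) of the continuous (M₀) parameterization,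
with `θ = (μ, σ, α, β)`. -/
def psiM (θ : Fin 4 → ℝ) (t : ℝ) : ℂ :=
  if θ 2 = 1 then
    ((-(|θ 1 * t|) : ℝ) : ℂ)
      - Complex.I * (((2 * θ 3 / Real.pi) * (θ 1 * t) * Real.log |θ 1 * t| : ℝ) : ℂ)
      + Complex.I * ((θ 0 * t : ℝ) : ℂ)
  else
    ((-(|θ 1 * t| ^ (θ 2)) : ℝ) : ℂ) *
        (1 + Complex.I * ((θ 3 * Real.sign t * Real.tan (Real.pi * θ 2 / 2)
            * (|θ 1 * t| ^ (1 - θ 2) - 1) : ℝ) : ℂ))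
      + Complex.I * ((θ 0 * t : ℝ) : ℂ)

/-- Characteristic function of the (M₀) parameterization. -/
def phiM (θ : Fin 4 → ℝ) (t : ℝ) : ℂ := Complex.exp (psiM θ t)

/-- Stable density in the (M₀) parameterization, via Fourier inversion. -/
def fM (θ : Fin 4 → ℝ) (x : ℝ) : ℝ :=
  (1 / (2 * Real.pi)) *
    (∫ t : ℝ, Complex.exp (-Complex.I * (t : ℂ) * (x : ℂ)) * phiM θ t).re

/-- Partial derivative of the density in parameter `i`. -/
def fP (i : Fin 4) (θ : Fin 4 → ℝ) (x : ℝ) : ℝ :=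
  deriv (fun s => fM (Function.update θ i s) x) (θ i)

/-- Second partial derivative of the density in parameters `i`, `j`. -/
def fPP (i j : Fin 4) (θ : Fin 4 → ℝ) (x : ℝ) : ℝ :=
  deriv (fun s => fP i (Function.update θ j s) x) (θ j)

/-- Derivative of the density in `x`. -/
def fX (θ : Fin 4 → ℝ) (x : ℝ) : ℝ := deriv (fun y => fM θ y) x

/-- Mixed derivative `∂²f/∂x∂θᵢ`. -/
def fPX (i : Fin 4) (θ : Fin 4 → ℝ) (x : ℝ) : ℝ := deriv (fun y => fP i θ y) x

/-- Score functions. -/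
def ellP (i : Fin 4) (θ : Fin 4 → ℝ) (x : ℝ) : ℝ := fP i θ x / fM θ x

/-- Derivative of the score in `x`. -/
def ellPX (i : Fin 4) (θ : Fin 4 → ℝ) (x : ℝ) : ℝ := deriv (fun y => ellP i θ y) x

/-- Derivative of the score `ℓ_{θᵢ}` in the parameter `θⱼ`. -/
def ellPP (i j : Fin 4) (θ : Fin 4 → ℝ) (x : ℝ) : ℝ :=
  deriv (fun s => ellP i (Function.update θ j s) x) (θ j)

/-- `h = O(r)` as `|x| → ∞`. -/
def IsBigOAtInfty (h r : ℝ → ℝ) : Prop :=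
  ∃ c > 0, ∃ M > 0, ∀ x : ℝ, M ≤ |x| → |h x| ≤ c * r x


end



noncomputable def Tc (z : ℂ) : ℂ :=
  -(2 / (Real.pi : ℂ)) * Complex.Gamma ((1 + z) / 2) * Complex.Gamma ((3 - z) / 2)
    * Complex.sin (Real.pi * z / 2)

noncomputable def Tr (a : ℝ) : ℝ := (Tc a).re
noncomputable def Trd (a : ℝ) : ℝ := (deriv Tc a).re

lemma Tr_eq (a : ℝ) : Tr a = -(2 / Real.pi) * Real.Gamma ((1 + a) / 2) * Real.Gamma ((3 - a) / 2)
    * Real.sin (Real.pi * a / 2) := by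
  have : Tc a = ((-(2 / Real.pi) * Real.Gamma ((1 + a) / 2) * Real.Gamma ((3 - a) / 2)
    * Real.sin (Real.pi * a / 2) : ℝ) : ℂ) := by
    unfold Tc
    push_cast [← Complex.Gamma_ofReal]
    rfl
  unfold Tr
  rw [this, Complex.ofReal_re]

lemma Tc_diffOn : DifferentiableOn ℂ Tc {z : ℂ | -1 < z.re ∧ z.re < 3} := by
  intro z hz
  have h1 : DifferentiableAt ℂ Complex.Gamma ((1 + z) / 2) := by
    apply Complex.differentiableAt_Gamma
    intro m h
    have := congrArg Complex.re h
    simp at this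
    have hm : (0:ℝ) ≤ m := Nat.cast_nonneg m
    have := hz.1
    linarith
  have h2 : DifferentiableAt ℂ Complex.Gamma ((3 - z) / 2) := by
    apply Complex.differentiableAt_Gamma
    intro m h
    have := congrArg Complex.re h
    simp at this
    have hm : (0:ℝ) ≤ m := Nat.cast_nonneg m
    have := hz.2
    linarith
  apply DifferentiableAt.differentiableWithinAt
  unfold Tc
  refine (((differentiableAt_const _).mul ?_).mul ?_).mul ?_
  · exact h1.comp z (f := fun z : ℂ => (1 + z) / 2) (by fun_prop)
  · exact h2.comp z (f := fun z : ℂ => (3 - z) / 2) (by fun_prop)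
  · fun_prop

lemma strip_open : IsOpen {z : ℂ | -1 < z.re ∧ z.re < 3} :=
  (isOpen_lt continuous_const Complex.continuous_re).inter
    (isOpen_lt Complex.continuous_re continuous_const)

lemma hasDerivAt_Tr {a : ℝ} (h0 : 0 < a) (h2 : a < 2) : HasDerivAt Tr (Trd a) a := by
  have hm : (a : ℂ) ∈ {z : ℂ | -1 < z.re ∧ z.re < 3} := by
    simp; constructor <;> linarith
  have := (Tc_diffOn.differentiableAt (strip_open.mem_nhds hm)).hasDerivAt
  exact this.real_of_complex

lemma continuousAt_Trd {a : ℝ} (h0 : 0 < a) (h2 : a < 2) : ContinuousAt Trd a := by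
  have hm : (a : ℂ) ∈ {z : ℂ | -1 < z.re ∧ z.re < 3} := by
    simp; constructor <;> linarith
  have h := ((Tc_diffOn.deriv strip_open).differentiableAt (strip_open.mem_nhds hm)).continuousAt
  exact Complex.continuous_re.continuousAt.comp
    (ContinuousAt.comp (f := fun x : ℝ => (x : ℂ)) h Complex.continuous_ofReal.continuousAt)

lemma Tr_one : Tr 1 = -(2 / Real.pi) := by
  rw [Tr_eq]; norm_num

lemma Tr_ne {a : ℝ} (h1 : a ≠ 1) :
    Tr a = (a - 1) * Real.tan (Real.pi * a / 2) := by
  rw [Tr_eq, Real.tan_eq_sin_div_cos]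
  have e1 : (3 - a) / 2 = (1 - a) / 2 + 1 := by ring
  have hne : (1 - a) / 2 ≠ 0 := by
    intro h; apply h1; linarith
  have r := Real.Gamma_mul_Gamma_one_sub ((1 + a) / 2)
  have e2 : 1 - (1 + a) / 2 = (1 - a) / 2 := by ring
  have e3 : Real.sin (Real.pi * ((1 + a) / 2)) = Real.cos (Real.pi * a / 2) := by
    rw [← Real.sin_add_pi_div_two]; congr 1; ring
  rw [e2, e3] at r
  rw [e1, Real.Gamma_add_one hne]
  have hp := Real.pi_ne_zero
  calc _ = -(2 / Real.pi) * ((1 - a) / 2) * (Real.Gamma ((1 + a) / 2) * Real.Gamma ((1 - a) / 2))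
        * Real.sin (Real.pi * a / 2) := by ring
    _ = _ := by
      rw [r]
      by_cases hc : Real.cos (Real.pi * a / 2) = 0
      · simp [hc]
      · field_simp; ring

noncomputable def ell (a s : ℝ) : ℝ := ∫ w in (0:ℝ)..(Real.log s), Real.exp ((a - 1) * w)
noncomputable def emm (a s : ℝ) : ℝ := ∫ w in (0:ℝ)..(Real.log s), w * Real.exp ((a - 1) * w)

lemma ell_neg (a s : ℝ) : ell a (-s) = ell a s := by simp [ell]

lemma ell_one (s : ℝ) : ell 1 s = Real.log s := by simp [ell]

lemma ell_ne {a s : ℝ} (h : a ≠ 1) (hs : s ≠ 0) : ell a s = (|s| ^ (a - 1) - 1) / (a - 1) := by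
  have h' : a - 1 ≠ 0 := sub_ne_zero.2 h
  unfold ell
  rw [intervalIntegral.integral_comp_mul_left (fun x => Real.exp x) h', integral_exp]
  rw [Real.rpow_def_of_pos (abs_pos.2 hs), Real.log_abs]
  simp [mul_comm]
  field_simp

lemma hasDerivAt_ell {a s : ℝ} (hs : 0 < s) : HasDerivAt (ell a) (s ^ (a - 2)) s := by
  have h1 : HasDerivAt (fun x => ∫ w in (0:ℝ)..x, Real.exp ((a - 1) * w))
      (Real.exp ((a - 1) * Real.log s)) (Real.log s) := by
    exact (continuous_iff_continuousAt.2 fun _ => by fun_prop :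
      Continuous fun w : ℝ => Real.exp ((a-1)*w)).integral_hasStrictDerivAt 0 _ |>.hasDerivAt
  have := h1.comp s (Real.hasDerivAt_log hs.ne')
  refine this.congr_deriv ?_
  rw [Real.rpow_def_of_pos hs]
  rw [← Real.exp_log hs, ← Real.exp_neg, Real.log_exp, ← Real.exp_add]
  congr 1; ring

lemma hasDerivAt_emm {a s : ℝ} (hs : 0 < s) :
    HasDerivAt (emm a) (Real.log s * s ^ (a - 2)) s := by
  have h1 : HasDerivAt (fun x => ∫ w in (0:ℝ)..x, w * Real.exp ((a - 1) * w))
      (Real.log s * Real.exp ((a - 1) * Real.log s)) (Real.log s) := by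
    exact (continuous_iff_continuousAt.2 fun _ => by fun_prop :
      Continuous fun w : ℝ => w * Real.exp ((a-1)*w)).integral_hasStrictDerivAt 0 _ |>.hasDerivAt
  have := h1.comp s (Real.hasDerivAt_log hs.ne')
  refine this.congr_deriv ?_
  rw [mul_assoc]
  congr 1
  rw [Real.rpow_def_of_pos hs]
  rw [← Real.exp_log hs, ← Real.exp_neg, Real.log_exp, ← Real.exp_add]
  congr 1; ring

lemma continuous_emm_param (s : ℝ) : Continuous (fun a => emm a s) := by
  unfold emm
  apply intervalIntegral.continuous_parametric_intervalIntegral_of_continuous' (by fun_prop)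

lemma continuous_ell_param (s : ℝ) : Continuous (fun a => ell a s) := by
  unfold ell
  apply intervalIntegral.continuous_parametric_intervalIntegral_of_continuous' (by fun_prop)

lemma exp_le_aux {L w c : ℝ} (hw : w ∈ Set.uIoc 0 L) :
    Real.exp (c * w) ≤ 1 + Real.exp (c * L) := by
  rcases Set.mem_uIoc.1 hw with h | h
  · rcases le_total 0 c with hc | hc
    · have : Real.exp (c * w) ≤ Real.exp (c * L) := Real.exp_le_exp.2 (by nlinarith)
      linarith
    · have : Real.exp (c * w) ≤ 1 := Real.exp_le_one_iff.2 (by nlinarith)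
      have := Real.exp_pos (c * L)
      linarith
  · rcases le_total 0 c with hc | hc
    · have : Real.exp (c * w) ≤ 1 := Real.exp_le_one_iff.2 (by nlinarith)
      have := Real.exp_pos (c * L)
      linarith
    · have : Real.exp (c * w) ≤ Real.exp (c * L) := Real.exp_le_exp.2 (by nlinarith)
      linarith

lemma abs_le_of_uIoc {L w : ℝ} (hw : w ∈ Set.uIoc 0 L) : |w| ≤ |L| := by
  rcases Set.mem_uIoc.1 hw with h | h
  · rw [abs_of_pos h.1, abs_of_pos (by linarith)]; exact h.2
  · rw [abs_of_nonpos h.2, abs_of_neg (by linarith)]; linarith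

lemma hasDerivAt_ell_param (a s : ℝ) : HasDerivAt (fun a => ell a s) (emm a s) a := by
  unfold ell emm
  have := intervalIntegral.hasDerivAt_integral_of_dominated_loc_of_deriv_le
    (μ := volume) (a := 0) (b := Real.log s) (F := fun a w => Real.exp ((a - 1) * w))
    (F' := fun a w => w * Real.exp ((a - 1) * w)) (x₀ := a) (s := Metric.ball a 1)
    (bound := fun w => |Real.log s| * Real.exp ((|a|+2) * |Real.log s|)) (Metric.ball_mem_nhds a one_pos)
    (Eventually.of_forall fun x => (by fun_prop : Continuous fun w : ℝ => Real.exp ((x - 1) * w)).aestronglyMeasurable)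
    ((by fun_prop : Continuous fun w : ℝ => Real.exp ((a - 1) * w)).intervalIntegrable _ _)
    ((by fun_prop : Continuous fun w : ℝ => w * Real.exp ((a - 1) * w)).aestronglyMeasurable)
    ?_ ?_ ?_
  · exact this.2
  · refine Eventually.of_forall fun w hw x hx => ?_
    rw [Real.norm_eq_abs, abs_mul, Real.abs_exp]
    have h1 := abs_le_of_uIoc hw
    refine mul_le_mul h1 (Real.exp_le_exp.2 ?_) (Real.exp_pos _).le (abs_nonneg _)
    calc (x - 1) * w ≤ |(x-1) * w| := le_abs_self _
      _ = |x - 1| * |w| := abs_mul _ _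
      _ ≤ _ := by
        refine mul_le_mul ?_ h1 (abs_nonneg _) (by positivity)
        rw [Metric.mem_ball, Real.dist_eq] at hx
        have h3 := abs_sub x 1
        have h4 := abs_sub_abs_le_abs_sub x a
        rw [abs_one] at h3
        linarith
  · exact intervalIntegrable_const
  · refine Eventually.of_forall fun w hw x hx => ?_
    have : HasDerivAt (fun x : ℝ => (x - 1) * w) w x := by
      simpa using ((hasDerivAt_id x).sub_const 1).mul_const w
    simpa [mul_comm] using this.exp

lemma ell_bound {a s : ℝ} (hs : 0 < s) : |s * ell a s| ≤ (1 + |Real.log s|) ^ 2 * (s + s ^ a) := by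
  have h : |ell a s| ≤ (1 + s ^ (a - 1)) * |Real.log s| := by
    have := intervalIntegral.norm_integral_le_of_norm_le_const (a := 0) (b := Real.log s)
      (f := fun w => Real.exp ((a-1) * w)) (C := 1 + Real.exp ((a-1) * Real.log s)) (by
        intro w hw
        rw [Real.norm_eq_abs, Real.abs_exp]
        exact exp_le_aux hw)
    rw [Real.rpow_def_of_pos hs, mul_comm (Real.log s)]
    simpa [ell] using this
  rw [abs_mul, abs_of_pos hs]
  have e : s ^ a = s * s ^ (a - 1) := by
    rw [Real.rpow_sub_one hs.ne']; field_simp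
  have := Real.rpow_pos_of_pos hs (a-1)
  have hl := abs_nonneg (Real.log s)
  calc s * |ell a s| ≤ s * ((1 + s ^ (a - 1)) * |Real.log s|) := by gcongr
    _ = |Real.log s| * (s + s ^ a) := by rw [e]; ring
    _ ≤ _ := by
      have := Real.rpow_pos_of_pos hs a
      gcongr
      nlinarith

lemma emm_bound {a s : ℝ} (hs : 0 < s) : |s * emm a s| ≤ (1 + |Real.log s|) ^ 2 * (s + s ^ a) := by
  have h : |emm a s| ≤ |Real.log s| * (1 + s ^ (a - 1)) * |Real.log s| := by
    have := intervalIntegral.norm_integral_le_of_norm_le_const (a := 0) (b := Real.log s)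
      (f := fun w => w * Real.exp ((a-1) * w))
      (C := |Real.log s| * (1 + Real.exp ((a-1) * Real.log s))) (by
        intro w hw
        rw [Real.norm_eq_abs, abs_mul, Real.abs_exp]
        exact mul_le_mul (abs_le_of_uIoc hw) (exp_le_aux hw) (Real.exp_pos _).le (abs_nonneg _))
    rw [Real.rpow_def_of_pos hs, mul_comm (Real.log s)]
    simpa [emm] using this
  rw [abs_mul, abs_of_pos hs]
  have e : s ^ a = s * s ^ (a - 1) := by
    rw [Real.rpow_sub_one hs.ne']; field_simp
  have := Real.rpow_pos_of_pos hs (a-1)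
  have hl := abs_nonneg (Real.log s)
  calc s * |emm a s| ≤ s * (|Real.log s| * (1 + s ^ (a - 1)) * |Real.log s|) := by gcongr
    _ = |Real.log s|^2 * (s + s ^ a) := by rw [e]; ring
    _ ≤ _ := by
      have := Real.rpow_pos_of_pos hs a
      gcongr
      linarith

noncomputable def Psi (a b s : ℝ) : ℂ :=
  ((-(|s| ^ a) : ℝ) : ℂ) + Complex.I * ((b * Tr a * (s * ell a s) : ℝ) : ℂ)

lemma Psi_re (a b s : ℝ) : (Psi a b s).re = -(|s| ^ a) := by
  simp only [Psi, Complex.add_re, Complex.ofReal_re, Complex.re_mul_ofReal, Complex.I_re]; ring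

lemma Psi_neg (a b s : ℝ) : Psi a b (-s) = starRingEnd ℂ (Psi a b s) := by
  apply Complex.ext <;> simp [Psi, ell_neg]

lemma Psi_zero {a b : ℝ} (ha : a ≠ 0) : Psi a b 0 = 0 := by
  simp [Psi, Real.zero_rpow ha]

lemma psiM_eq {θ : Fin 4 → ℝ} (h1 : 0 < θ 1) (h2 : 0 < θ 2) (t : ℝ) :
    psiM θ t = Psi (θ 2) (θ 3) (θ 1 * t) + Complex.I * ((θ 0 * t : ℝ) : ℂ) := by
  unfold psiM
  rcases eq_or_ne t 0 with rfl | ht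
  · simp [Psi_zero h2.ne', Real.zero_rpow h2.ne']
  have hs : θ 1 * t ≠ 0 := mul_ne_zero h1.ne' ht
  split_ifs with h
  · congr 1
    simp only [Psi, h, ell_one, Tr_one, Real.rpow_one, Real.log_abs]
    rw [sub_eq_add_neg, ← mul_neg, ← Complex.ofReal_neg]
    congr 3
    ring
  · congr 1
    simp only [Psi, ell_ne h hs, Tr_ne h]
    have h' : θ 2 - 1 ≠ 0 := sub_ne_zero.2 h
    rw [mul_add, mul_one]
    congr 1
    rw [mul_left_comm, ← Complex.ofReal_mul]
    congr 2
    have hp : 0 < |θ 1 * t| := abs_pos.2 hs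
    have e1 : |θ 1 * t| ^ (θ 2) * |θ 1 * t| ^ (1 - θ 2) = |θ 1 * t| := by
      rw [← Real.rpow_add hp]; simp
    have e2 : |θ 1 * t| * |θ 1 * t| ^ (θ 2 - 1) = |θ 1 * t| ^ (θ 2) := by
      rw [Real.rpow_sub_one hp.ne']; field_simp
    have e3 : Real.sign t * |θ 1 * t| = θ 1 * t := by
      rw [abs_mul, abs_of_pos h1, mul_left_comm]
      congr 1
      rcases lt_or_gt_of_ne ht with h | h
      · rw [Real.sign_of_neg h, abs_of_neg h]; ring
      · rw [Real.sign_of_pos h, abs_of_pos h]; ring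
    have e4 : Real.sign t * |θ 1 * t| ^ (θ 2) = θ 1 * t * |θ 1 * t| ^ (θ 2 - 1) := by
      rw [← e2, ← mul_assoc, e3]
    calc _ = θ 3 * Real.tan (Real.pi * θ 2 / 2) *
          (Real.sign t * |θ 1 * t| ^ (θ 2)
            - Real.sign t * (|θ 1 * t| ^ (θ 2) * |θ 1 * t| ^ (1 - θ 2))) := by ring
      _ = _ := by
        rw [e1, e3, e4]; field_simp

section
open scoped ComplexOrder

noncomputable def kerf (x t : ℝ) : ℂ := Complex.exp (-(Complex.I * ((x * t : ℝ) : ℂ)))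

lemma norm_ker (x t : ℝ) : ‖kerf x t‖ = 1 := by
  simp [kerf, Complex.norm_exp]

lemma continuous_ker2 : Continuous (fun q : ℝ × ℝ => kerf q.1 q.2) := by
  unfold kerf; fun_prop

lemma continuous_ker (x : ℝ) : Continuous (kerf x) := by
  unfold kerf; fun_prop

lemma ker_mul (x y t : ℝ) : kerf x t * kerf y t = kerf (x + y) t := by
  unfold kerf
  rw [← Complex.exp_add]; congr 1; push_cast; ring

noncomputable def FT (G : ℝ → ℂ) (x : ℝ) : ℂ := ∫ t, kerf x t * G t

lemma ker_integrable {G : ℝ → ℂ} (hG : Integrable G) (x : ℝ) :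
    Integrable (fun t => kerf x t * G t) := by
  refine hG.bdd_mul (c := 1) (continuous_ker x).aestronglyMeasurable ?_
  exact Eventually.of_forall fun t => (norm_ker x t).le

def Mult (Φ : ℝ → ℂ) : Prop :=
  Measurable Φ ∧ (∃ C : ℝ, ∀ t, ‖Φ t‖ ≤ C) ∧
    ∀ G : ℝ → ℂ, Integrable G → (∀ x, 0 ≤ FT G x) → ∀ x, 0 ≤ FT (fun t => Φ t * G t) x

lemma Mult.integrable {Φ G : ℝ → ℂ} (h : Mult Φ) (hG : Integrable G) :
    Integrable (fun t => Φ t * G t) := by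
  obtain ⟨hm, ⟨C, hC⟩, -⟩ := h
  exact hG.bdd_mul hm.aestronglyMeasurable (Eventually.of_forall hC)

lemma Mult.mul {Φ Ξ : ℝ → ℂ} (h : Mult Φ) (h' : Mult Ξ) : Mult (fun t => Φ t * Ξ t) := by
  obtain ⟨C, hC⟩ := h.2.1
  obtain ⟨C', hC'⟩ := h'.2.1
  refine ⟨h.1.mul h'.1, ⟨C * C', fun t => ?_⟩, fun G hG hp x => ?_⟩
  · rw [norm_mul]
    exact mul_le_mul (hC t) (hC' t) (norm_nonneg _) ((norm_nonneg _).trans (hC t))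
  · have := h.2.2 _ (h'.integrable hG) (h'.2.2 G hG hp) x
    simpa only [mul_assoc] using this

lemma Mult.add {Φ Ξ : ℝ → ℂ} (h : Mult Φ) (h' : Mult Ξ) : Mult (fun t => Φ t + Ξ t) := by
  obtain ⟨C, hC⟩ := h.2.1
  obtain ⟨C', hC'⟩ := h'.2.1
  refine ⟨h.1.add h'.1, ⟨C + C', fun t => (norm_add_le _ _).trans (add_le_add (hC t) (hC' t))⟩,
    fun G hG hp x => ?_⟩
  have e : FT (fun t => (Φ t + Ξ t) * G t) x = FT (fun t => Φ t * G t) x + FT (fun t => Ξ t * G t) x := by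
    unfold FT
    rw [← integral_add (ker_integrable (h.integrable hG) x) (ker_integrable (h'.integrable hG) x)]
    congr 1; ext t; ring
  rw [e]
  exact add_nonneg (h.2.2 G hG hp x) (h'.2.2 G hG hp x)

lemma Mult.const {c : ℝ} (hc : 0 ≤ c) : Mult (fun _ => (c : ℂ)) := by
  refine ⟨measurable_const, ⟨‖(c:ℂ)‖, fun _ => le_rfl⟩, fun G hG hp x => ?_⟩
  have e : FT (fun t => (c:ℂ) * G t) x = c * FT G x := by
    unfold FT
    rw [← integral_const_mul]
    congr 1; ext t; ring
  rw [e]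
  exact mul_nonneg (Complex.zero_le_real.2 hc) (hp x)

lemma Mult.trans (y : ℝ) : Mult (kerf y) := by
  refine ⟨(continuous_ker y).measurable, ⟨1, fun t => (norm_ker y t).le⟩, fun G hG hp x => ?_⟩
  have e : FT (fun t => kerf y t * G t) x = FT G (x + y) := by
    unfold FT
    congr 1; ext t; rw [← mul_assoc, ker_mul]
  rw [e]; exact hp _

lemma Mult.lim {Φ : ℕ → ℝ → ℂ} {Ξ : ℝ → ℂ} {C : ℝ} (h : ∀ n, Mult (Φ n))
    (hC : ∀ n t, ‖Φ n t‖ ≤ C) (hl : ∀ t, Tendsto (fun n => Φ n t) atTop (nhds (Ξ t))) :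
    Mult Ξ := by
  have hm : Measurable Ξ := measurable_of_tendsto_metrizable (fun n => (h n).1)
    (tendsto_pi_nhds.2 hl)
  refine ⟨hm, ⟨C, fun t => le_of_tendsto (hl t).norm (Eventually.of_forall fun n => hC n t)⟩,
    fun G hG hp x => ?_⟩
  have : Tendsto (fun n => FT (fun t => Φ n t * G t) x) atTop (nhds (FT (fun t => Ξ t * G t) x)) := by
    unfold FT
    apply tendsto_integral_of_dominated_convergence (fun t => C * ‖G t‖)
    · exact fun n => (ker_integrable ((h n).integrable hG) x).aestronglyMeasurable
    · exact hG.norm.const_mul C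
    · intro n
      refine Eventually.of_forall fun t => ?_
      rw [norm_mul, norm_mul, norm_ker, one_mul]
      exact mul_le_mul_of_nonneg_right (hC n t) (norm_nonneg _)
    · exact Eventually.of_forall fun t => ((hl t).mul_const _).const_mul _
  exact ge_of_tendsto this (Eventually.of_forall fun n => (h n).2.2 G hG hp x)

lemma Mult.pow {Φ : ℝ → ℂ} (h : Mult Φ) (n : ℕ) : Mult (fun t => Φ t ^ n) := by
  induction n with
  | zero => simpa using Mult.const zero_le_one
  | succ k ih => simpa only [pow_succ] using ih.mul h

lemma Mult.sum {Φ : ℕ → ℝ → ℂ} (h : ∀ n, Mult (Φ n)) (n : ℕ) :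
    Mult (fun t => ∑ k ∈ Finset.range n, Φ k t) := by
  induction n with
  | zero => simpa using Mult.const le_rfl
  | succ k ih => simpa only [Finset.sum_range_succ] using ih.add (h k)

lemma Mult.series {Φ : ℝ → ℂ} (h : Mult Φ) {c : ℕ → ℝ} (hc : ∀ n, 0 ≤ c n)
    (hc' : ∀ n, c n ≤ 1 / (n.factorial : ℝ)) :
    Mult (fun t => ∑' n, (c n : ℂ) * Φ t ^ n) := by
  obtain ⟨C, hC⟩ := h.2.1
  have hC0 : 0 ≤ C := (norm_nonneg _).trans (hC 0)
  have hb : ∀ n t, ‖(c n : ℂ) * Φ t ^ n‖ ≤ C ^ n / n.factorial := fun n t => by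
    rw [norm_mul, norm_pow, Complex.norm_real, Real.norm_of_nonneg (hc n)]
    calc c n * ‖Φ t‖ ^ n ≤ (1 / (n.factorial : ℝ)) * C ^ n := by
          gcongr
          · exact hc' n
          · exact hC t
      _ = _ := by ring
  have hs := Real.summable_pow_div_factorial C
  refine Mult.lim (Φ := fun n t => ∑ k ∈ Finset.range n, (c k : ℂ) * Φ t ^ k)
    (C := ∑' n, C ^ n / n.factorial)
    (fun n => Mult.sum (fun k => (Mult.const (hc k)).mul (h.pow k)) n) ?_ ?_
  · intro n t
    refine (norm_sum_le _ _).trans ?_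
    refine (Finset.sum_le_sum fun k _ => hb k t).trans ?_
    exact hs.sum_le_tsum _ (fun k _ => by positivity)
  · intro t
    exact (Summable.of_norm_bounded hs (fun n => hb n t)).hasSum.tendsto_sum_nat

lemma exp_tsum (z : ℂ) : Complex.exp z = ∑' n : ℕ, ((1 / (n.factorial : ℝ) : ℝ) : ℂ) * z ^ n := by
  rw [Complex.exp_eq_exp_ℂ, NormedSpace.exp_eq_tsum_div]
  refine tsum_congr fun n => ?_
  push_cast; ring

lemma Mult.exp {Φ : ℝ → ℂ} (h : Mult Φ) : Mult (fun t => Complex.exp (Φ t)) := by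
  simp_rw [exp_tsum]
  exact h.series (fun n => by positivity) (fun n => le_rfl)

lemma Mult.exp_sub {Φ : ℝ → ℂ} (h : Mult Φ) : Mult (fun t => Complex.exp (Φ t) - Φ t) := by
  have e : ∀ z : ℂ, Complex.exp z - z =
      ∑' n : ℕ, ((if n = 1 then 0 else 1 / (n.factorial : ℝ) : ℝ) : ℂ) * z ^ n := by
    intro z
    have hsum : Summable (fun n : ℕ => ((1 / (n.factorial : ℝ) : ℝ) : ℂ) * z ^ n) := by
      have := NormedSpace.expSeries_div_summable (𝔸 := ℂ) z
      refine this.congr fun n => ?_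
      push_cast; ring
    rw [exp_tsum, hsum.tsum_eq_add_tsum_ite 1]
    simp only [Nat.factorial_one, Nat.cast_one, div_one, Complex.ofReal_one, pow_one, one_mul, add_sub_cancel_left]
    congr 1; ext n
    split_ifs <;> simp
  simp_rw [e]
  refine h.series (fun n => ?_) (fun n => ?_)
  · split_ifs <;> positivity
  · split_ifs
    · positivity
    · exact le_rfl

lemma FT_integral {m : Measure ℝ} [SFinite m] {Φ : ℝ → ℝ → ℂ} {b : ℝ → ℝ}
    (hmeas : Measurable (Function.uncurry Φ)) (hb : Integrable b m)
    (hbd : ∀ᵐ u ∂m, ∀ t, ‖Φ u t‖ ≤ b u) {G : ℝ → ℂ} (hG : Integrable G) (x : ℝ) :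
    FT (fun t => (∫ u, Φ u t ∂m) * G t) x = ∫ u, FT (fun t => Φ u t * G t) x ∂m := by
  unfold FT
  have hint : Integrable (Function.uncurry fun u t => kerf x t * (Φ u t * G t)) (m.prod volume) := by
    have h0 : Integrable (fun q : ℝ × ℝ => b q.1 * ‖G q.2‖) (m.prod volume) := hb.mul_prod hG.norm
    refine h0.mono' ?_ ?_
    · refine AEStronglyMeasurable.mul ?_ (AEStronglyMeasurable.mul hmeas.aestronglyMeasurable ?_)
      · exact ((continuous_ker x).comp continuous_snd).aestronglyMeasurable
      · exact hG.aestronglyMeasurable.comp_snd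
    · have : ∀ᵐ q ∂(m.prod (volume : Measure ℝ)), ∀ t, ‖Φ q.1 t‖ ≤ b q.1 :=
        Measure.quasiMeasurePreserving_fst.ae hbd
      filter_upwards [this] with q hq
      simp only [Function.uncurry, norm_mul, norm_ker, one_mul]
      exact mul_le_mul_of_nonneg_right (hq _) (norm_nonneg _)
  rw [integral_integral_swap hint]
  congr 1; ext t
  rw [integral_const_mul, integral_mul_const]

lemma Mult.integral {m : Measure ℝ} [SFinite m] {Φ : ℝ → ℝ → ℂ} {b : ℝ → ℝ}
    (hmeas : Measurable (Function.uncurry Φ)) (hb : Integrable b m)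
    (hbd : ∀ᵐ u ∂m, ∀ t, ‖Φ u t‖ ≤ b u) (h : ∀ᵐ u ∂m, Mult (Φ u)) :
    Mult (fun t => ∫ u, Φ u t ∂m) := by
  refine ⟨?_, ⟨∫ u, b u ∂m, fun t => ?_⟩, fun G hG hp x => ?_⟩
  · exact (StronglyMeasurable.integral_prod_left' (f := Function.uncurry Φ)
      hmeas.stronglyMeasurable).measurable
  · exact norm_integral_le_of_norm_le hb (hbd.mono fun u hu => hu t)
  · rw [FT_integral hmeas hb hbd hG]
    apply integral_nonneg_of_ae
    filter_upwards [h] with u hu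
    exact hu.2.2 G hG hp x

end


lemma beta_int {q k : ℝ} (hq : 0 < q) (hk : q / 2 < k) :
    IntegrableOn (fun v : ℝ => v ^ (q - 1) * (1 + v ^ 2) ^ (-k)) (Set.Ioi 0) ∧
    Real.Gamma k * ∫ v in Set.Ioi (0:ℝ), v ^ (q - 1) * (1 + v ^ 2) ^ (-k) =
      1 / 2 * Real.Gamma (q / 2) * Real.Gamma (k - q / 2) := by
  have hk0 : 0 < k := by linarith
  have hG : 0 < Real.Gamma k := Real.Gamma_pos_of_pos hk0
  have hI : ∀ v : ℝ, ∫ x in Set.Ioi (0:ℝ), x ^ (k - 1) * Real.exp (-((1 + v ^ 2) * x)) =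
      (1 + v ^ 2) ^ (-k) * Real.Gamma k := fun v => by
    rw [Real.integral_rpow_mul_exp_neg_mul_Ioi hk0 (by positivity), one_div, Real.inv_rpow (by positivity),
      Real.rpow_neg (by positivity)]
  have hJ : ∀ x ∈ Set.Ioi (0:ℝ), ∫ v in Set.Ioi (0:ℝ), v ^ (q - 1) * Real.exp (-x * v ^ (2:ℝ)) =
      x ^ (-(q / 2)) * (1 / 2) * Real.Gamma (q / 2) := fun x hx => by
    rw [integral_rpow_mul_exp_neg_mul_rpow two_pos (by linarith) hx]
    simp [neg_div]
  set m := (volume : Measure ℝ).restrict (Set.Ioi 0) with hm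
  set H : ℝ × ℝ → ℝ := fun z => z.1 ^ (q - 1) * (z.2 ^ (k - 1) * Real.exp (-((1 + z.1 ^ 2) * z.2)))
    with hH
  have hHm : AEStronglyMeasurable H (m.prod m) := by
    apply Measurable.aestronglyMeasurable
    fun_prop
  have hjj : ∀ x ∈ Set.Ioi (0:ℝ), ∫ v, H (v, x) ∂m =
      (1 / 2 * Real.Gamma (q / 2)) * (Real.exp (-x) * x ^ (k - q / 2 - 1)) := fun x hx => by
    have hx' : 0 < x := hx
    have e : ∀ v, H (v, x) = (x ^ (k - 1) * Real.exp (-x)) * (v ^ (q - 1) * Real.exp (-x * v ^ (2:ℝ))) := by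
      intro v
      have : Real.exp (-((1 + v ^ 2) * x)) = Real.exp (-x) * Real.exp (-x * v ^ (2:ℝ)) := by
        rw [← Real.exp_add, Real.rpow_two]; congr 1; ring
      simp only [hH, this]; ring
    simp_rw [e]
    rw [integral_const_mul, hJ x hx]
    have : x ^ (k - q / 2 - 1) = x ^ (k - 1) * x ^ (-(q / 2)) := by
      rw [← Real.rpow_add hx']; congr 1; ring
    rw [this]; ring
  have hint : Integrable H (m.prod m) := by
    rw [integrable_prod_iff' hHm]
    constructor
    · filter_upwards [ae_restrict_mem measurableSet_Ioi] with x hx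
      have h1 := integrableOn_rpow_mul_exp_neg_mul_rpow (s := q - 1) (p := 2) (b := x) (by linarith) two_pos hx
      have h2 := h1.const_mul (x ^ (k - 1) * Real.exp (-x))
      refine h2.congr (Eventually.of_forall fun v => ?_)
      have : Real.exp (-((1 + v ^ 2) * x)) = Real.exp (-x) * Real.exp (-x * v ^ (2:ℝ)) := by
        rw [← Real.exp_add, Real.rpow_two]; congr 1; ring
      simp only [hH, this]; ring
    · have h1 := (Real.GammaIntegral_convergent (s := k - q / 2) (by linarith)).const_mul
        (1 / 2 * Real.Gamma (q / 2))
      refine h1.congr ?_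
      filter_upwards [ae_restrict_mem measurableSet_Ioi] with x hx
      rw [← hjj x hx]
      refine integral_congr_ae ?_
      filter_upwards [ae_restrict_mem measurableSet_Ioi] with v hv
      have hv' : 0 < v := hv
      have hx' : 0 < x := hx
      rw [Real.norm_of_nonneg]
      simp only [hH]; positivity
  have hii : ∀ v, ∫ x, H (v, x) ∂m = Real.Gamma k * (v ^ (q - 1) * (1 + v ^ 2) ^ (-k)) := fun v => by
    simp only [hH]
    rw [integral_const_mul, hI]; ring
  constructor
  · have h1 := hint.integral_prod_left
    simp_rw [hii] at h1
    have h2 := h1.const_mul (Real.Gamma k)⁻¹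
    refine h2.congr (Eventually.of_forall fun v => ?_)
    field_simp
  · have h1 := integral_integral_swap (f := fun v x => H (v, x)) hint
    simp_rw [hii] at h1
    rw [integral_const_mul] at h1
    rw [h1, setIntegral_congr_fun measurableSet_Ioi hjj, integral_const_mul, ← Real.Gamma_eq_integral (by linarith)]

noncomputable def KK (a : ℝ) : ℝ := Real.pi / (2 * Real.sin (Real.pi * a / 2))

lemma sin_pos_aux {a : ℝ} (h0 : 0 < a) (h2 : a < 2) : 0 < Real.sin (Real.pi * a / 2) := by
  have := Real.pi_pos
  apply Real.sin_pos_of_pos_of_lt_pi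
  · positivity
  · nlinarith

lemma KK_pos {a : ℝ} (h0 : 0 < a) (h2 : a < 2) : 0 < KK a := by
  have := sin_pos_aux h0 h2
  have := Real.pi_pos
  unfold KK; positivity

lemma K1_int {a : ℝ} (h0 : 0 < a) (h2 : a < 2) :
    IntegrableOn (fun v : ℝ => v ^ (a - 1) / (1 + v ^ 2)) (Set.Ioi 0) ∧
    ∫ v in Set.Ioi (0:ℝ), v ^ (a - 1) / (1 + v ^ 2) = KK a := by
  have h := beta_int (q := a) (k := 1) h0 (by linarith)
  have e : (fun v : ℝ => v ^ (a - 1) * (1 + v ^ 2) ^ (-(1:ℝ))) = fun v => v ^ (a - 1) / (1 + v ^ 2) := by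
    ext v; rw [Real.rpow_neg_one]; rfl
  rw [e, Real.Gamma_one, one_mul] at h
  refine ⟨h.1, ?_⟩
  rw [h.2, mul_assoc, Real.Gamma_mul_Gamma_one_sub, KK]
  have : Real.pi * (a / 2) = Real.pi * a / 2 := by ring
  have := sin_pos_aux h0 h2
  rw [‹Real.pi * (a/2) = _›]; field_simp

lemma K2_int {a : ℝ} (h0 : 0 < a) (h2 : a < 2) :
    IntegrableOn (fun v : ℝ => v ^ a / (1 + v ^ 2) ^ 2) (Set.Ioi 0) ∧
    ∫ v in Set.Ioi (0:ℝ), v ^ a / (1 + v ^ 2) ^ 2 = - (KK a * Tr a) / 2 := by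
  have h := beta_int (q := a + 1) (k := 2) (by linarith) (by linarith)
  have e : (fun v : ℝ => v ^ (a + 1 - 1) * (1 + v ^ 2) ^ (-(2:ℝ))) = fun v => v ^ a / (1 + v ^ 2) ^ 2 := by
    ext v
    rw [Real.rpow_neg (by positivity), Real.rpow_two, add_sub_cancel_right]; rfl
  rw [e, Real.Gamma_two, one_mul] at h
  refine ⟨h.1, ?_⟩
  rw [h.2, KK, Tr_eq]
  have := sin_pos_aux h0 h2
  have := Real.pi_pos
  have e1 : 2 - (a + 1) / 2 = (3 - a) / 2 := by ring
  rw [e1, add_comm a 1]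
  set S := Real.sin (Real.pi * a / 2)
  field_simp

lemma L1 {a s : ℝ} (h0 : 0 < a) (h2 : a < 2) (hs : 0 < s) :
    IntegrableOn (fun u : ℝ => u ^ a * (u / (u ^ 2 + s ^ 2) - 1 / u)) (Set.Ioi 0) ∧
    ∫ u in Set.Ioi (0:ℝ), u ^ a * (u / (u ^ 2 + s ^ 2) - 1 / u) = - (KK a * s ^ a) := by
  have h := K1_int h0 h2
  have key : ∀ u ∈ Set.Ioi (0:ℝ), u ^ a * (u / (u ^ 2 + s ^ 2) - 1 / u) =
      (-(s ^ (a - 1))) * ((s⁻¹ * u) ^ (a - 1) / (1 + (s⁻¹ * u) ^ 2)) := by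
    intro u hu
    have hu' : 0 < u := hu
    rw [Real.mul_rpow (by positivity) hu'.le, Real.inv_rpow hs.le, Real.rpow_sub_one hu'.ne']
    have := Real.rpow_pos_of_pos hs (a - 1)
    field_simp
    ring
  constructor
  · have h1 : IntegrableOn (fun u : ℝ => (s⁻¹ * u) ^ (a - 1) / (1 + (s⁻¹ * u) ^ 2)) (Set.Ioi 0) := by
      rw [integrableOn_Ioi_comp_mul_left_iff (fun v : ℝ => v ^ (a - 1) / (1 + v ^ 2)) 0 (inv_pos.2 hs)]
      simpa using h.1
    exact IntegrableOn.congr_fun (h1.const_mul (-(s ^ (a - 1)))) (fun u hu => (key u hu).symm) measurableSet_Ioi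
  · rw [setIntegral_congr_fun measurableSet_Ioi key, integral_const_mul,
      integral_comp_mul_left_Ioi (fun v : ℝ => v ^ (a - 1) / (1 + v ^ 2)) 0 (inv_pos.2 hs)]
    simp only [mul_zero, h.2, inv_inv, smul_eq_mul]
    rw [Real.rpow_sub_one hs.ne']; field_simp

lemma L2 {a s : ℝ} (h0 : 0 < a) (h2 : a < 2) (hs : 0 < s) :
    IntegrableOn (fun u : ℝ => u ^ a / (u ^ 2 + s ^ 2) ^ 2) (Set.Ioi 0) ∧
    s * ∫ u in Set.Ioi (0:ℝ), u ^ a / (u ^ 2 + s ^ 2) ^ 2 = s ^ (a - 2) * (-(KK a * Tr a) / 2) := by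
  have h := K2_int h0 h2
  have key : ∀ u ∈ Set.Ioi (0:ℝ), u ^ a / (u ^ 2 + s ^ 2) ^ 2 =
      (s ^ (a - 4)) * ((s⁻¹ * u) ^ a / (1 + (s⁻¹ * u) ^ 2) ^ 2) := by
    intro u hu
    have hu' : 0 < u := hu
    rw [Real.mul_rpow (by positivity) hu'.le, Real.inv_rpow hs.le, Real.rpow_sub hs]
    have := Real.rpow_pos_of_pos hs a
    have e : s ^ (4:ℝ) = s ^ 4 := by exact_mod_cast Real.rpow_natCast s 4
    rw [e]
    field_simp
    ring
  constructor
  · have h1 : IntegrableOn (fun u : ℝ => (s⁻¹ * u) ^ a / (1 + (s⁻¹ * u) ^ 2) ^ 2) (Set.Ioi 0) := by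
      rw [integrableOn_Ioi_comp_mul_left_iff (fun v : ℝ => v ^ a / (1 + v ^ 2) ^ 2) 0 (inv_pos.2 hs)]
      simpa using h.1
    exact IntegrableOn.congr_fun (h1.const_mul ((s ^ (a - 4)))) (fun u hu => (key u hu).symm) measurableSet_Ioi
  · rw [setIntegral_congr_fun measurableSet_Ioi key, integral_const_mul,
      integral_comp_mul_left_Ioi (fun v : ℝ => v ^ a / (1 + v ^ 2) ^ 2) 0 (inv_pos.2 hs)]
    simp only [mul_zero, h.2, inv_inv, smul_eq_mul]
    have e : s ^ (4:ℝ) = s ^ 4 := by exact_mod_cast Real.rpow_natCast s 4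
    rw [Real.rpow_sub hs, Real.rpow_sub hs, e, Real.rpow_two]; field_simp

lemma L3_int {a s : ℝ} (h0 : 0 < a) (h2 : a < 2) (hs : 0 < s) :
    IntegrableOn (fun u : ℝ => u ^ a * (1 / (u ^ 2 + s ^ 2) - 1 / (u ^ 2 + 1))) (Set.Ioi 0) := by
  set c := min s 1 with hc
  have hc0 : 0 < c := lt_min hs one_pos
  have h := (L2 h0 h2 hc0).1.const_mul |1 - s ^ 2|
  refine Integrable.mono' h ?_ ?_
  · apply Measurable.aestronglyMeasurable
    fun_prop
  · filter_upwards [ae_restrict_mem measurableSet_Ioi] with u hu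
    have hu' : 0 < u := hu
    have e : 1 / (u ^ 2 + s ^ 2) - 1 / (u ^ 2 + 1) = (1 - s ^ 2) / ((u ^ 2 + s ^ 2) * (u ^ 2 + 1)) := by
      field_simp; ring
    rw [e, norm_mul, Real.norm_of_nonneg (by positivity), Real.norm_eq_abs, abs_div,
      abs_of_pos (by positivity : 0 < (u ^ 2 + s ^ 2) * (u ^ 2 + 1))]
    have hcs : c ^ 2 ≤ s ^ 2 := by gcongr; exact min_le_left _ _
    have hc1 : c ^ 2 ≤ 1 := by
      have : c ≤ 1 := min_le_right _ _
      nlinarith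
    have : (u ^ 2 + c ^ 2) ^ 2 ≤ (u ^ 2 + s ^ 2) * (u ^ 2 + 1) := by
      rw [sq]; gcongr
    calc u ^ a * (|1 - s ^ 2| / ((u ^ 2 + s ^ 2) * (u ^ 2 + 1))) ≤
        u ^ a * (|1 - s ^ 2| / (u ^ 2 + c ^ 2) ^ 2) := by gcongr
      _ = _ := by ring

lemma L3_deriv {a s : ℝ} (h0 : 0 < a) (h2 : a < 2) (hs : 0 < s) :
    HasDerivAt (fun s => ∫ u in Set.Ioi (0:ℝ), u ^ a * (1 / (u ^ 2 + s ^ 2) - 1 / (u ^ 2 + 1)))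
      (KK a * Tr a * s ^ (a - 2)) s := by
  have hs2 : 0 < s / 2 := by linarith
  have := hasDerivAt_integral_of_dominated_loc_of_deriv_le (μ := volume.restrict (Set.Ioi (0:ℝ)))
    (F := fun s u => u ^ a * (1 / (u ^ 2 + s ^ 2) - 1 / (u ^ 2 + 1)))
    (F' := fun s u => (-(2 * s)) * (u ^ a / (u ^ 2 + s ^ 2) ^ 2)) (x₀ := s)
    (s := Set.Ioo (s / 2) (2 * s))
    (bound := fun u => 4 * s * (u ^ a / (u ^ 2 + (s / 2) ^ 2) ^ 2))
    (Ioo_mem_nhds (by linarith) (by linarith))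
    (Eventually.of_forall fun x => Measurable.aestronglyMeasurable (by fun_prop))
    (L3_int h0 h2 hs) (Measurable.aestronglyMeasurable (by fun_prop))
    ?_ ((L2 h0 h2 hs2).1.const_mul _) ?_
  · refine this.2.congr_deriv ?_
    rw [integral_const_mul]
    have := (L2 h0 h2 hs).2
    linear_combination (-2) * this
  · filter_upwards [ae_restrict_mem measurableSet_Ioi] with u hu x hx
    have hu' : 0 < u := hu
    have hx0 : 0 < x := by linarith [hx.1]
    rw [norm_mul, norm_neg, Real.norm_of_nonneg (by positivity), Real.norm_of_nonneg (by positivity)]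
    have := hx.1
    have := hx.2
    have h3 : 2 * x ≤ 4 * s := by linarith
    gcongr
  · filter_upwards [ae_restrict_mem measurableSet_Ioi] with u hu x hx
    have hu' : 0 < u := hu
    have hx0 : 0 < x := by linarith [hx.1]
    have hd : HasDerivAt (fun x : ℝ => u ^ 2 + x ^ 2) (2 * x) x := by
      simpa using (hasDerivAt_pow 2 x).const_add (u ^ 2)
    have hne : u ^ 2 + x ^ 2 ≠ 0 := by positivity
    have := ((hd.inv hne).sub_const (1 / (u ^ 2 + 1))).const_mul (u ^ a)
    simp only [one_div] at this ⊢
    refine this.congr_deriv ?_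
    ring

lemma L3 {a s : ℝ} (h0 : 0 < a) (h2 : a < 2) (hs : 0 < s) :
    ∫ u in Set.Ioi (0:ℝ), u ^ a * (1 / (u ^ 2 + s ^ 2) - 1 / (u ^ 2 + 1)) = KK a * Tr a * ell a s := by
  have := IsOpen.eqOn_of_deriv_eq (s := Set.Ioi (0:ℝ)) (x := 1)
    (f := fun s => ∫ u in Set.Ioi (0:ℝ), u ^ a * (1 / (u ^ 2 + s ^ 2) - 1 / (u ^ 2 + 1)))
    (g := fun s => KK a * Tr a * ell a s) isOpen_Ioi isPreconnected_Ioi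
    (fun x hx => (L3_deriv h0 h2 hx).differentiableAt.differentiableWithinAt)
    (fun x hx => ((hasDerivAt_ell hx).const_mul _).differentiableAt.differentiableWithinAt)
    (fun x hx => by
      rw [(L3_deriv h0 h2 hx).deriv, ((hasDerivAt_ell hx).const_mul (KK a * Tr a)).deriv])
    (by simp) (by simp [ell])
  exact this hs

lemma levy_re {a : ℝ} (h0 : 0 < a) (h2 : a < 2) (s : ℝ) :
    IntegrableOn (fun u : ℝ => u ^ a * (u / (u ^ 2 + s ^ 2) - 1 / u)) (Set.Ioi 0) ∧
    ∫ u in Set.Ioi (0:ℝ), u ^ a * (u / (u ^ 2 + s ^ 2) - 1 / u) = - (KK a * |s| ^ a) := by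
  rcases eq_or_ne s 0 with rfl | hs
  · have : ∀ u ∈ Set.Ioi (0:ℝ), u ^ a * (u / (u ^ 2 + 0 ^ 2) - 1 / u) = 0 := by
      intro u hu
      have : u ≠ 0 := ne_of_gt hu
      field_simp; simp
    constructor
    · exact (integrableOn_zero).congr_fun (fun u hu => (this u hu).symm) measurableSet_Ioi
    · rw [setIntegral_congr_fun measurableSet_Ioi this]
      simp [Real.zero_rpow h0.ne']
  · have := L1 h0 h2 (abs_pos.2 hs)
    simpa only [sq_abs] using this

lemma levy_im {a : ℝ} (h0 : 0 < a) (h2 : a < 2) (s : ℝ) :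
    IntegrableOn (fun u : ℝ => u ^ a * (s / (u ^ 2 + s ^ 2) - s / (u ^ 2 + 1))) (Set.Ioi 0) ∧
    ∫ u in Set.Ioi (0:ℝ), u ^ a * (s / (u ^ 2 + s ^ 2) - s / (u ^ 2 + 1)) =
      KK a * (Tr a * (s * ell a s)) := by
  rcases eq_or_ne s 0 with rfl | hs
  · simp
  · have h3 := L3 h0 h2 (abs_pos.2 hs)
    have h4 := L3_int h0 h2 (abs_pos.2 hs)
    simp only [sq_abs] at h3 h4
    have e : (fun u : ℝ => u ^ a * (s / (u ^ 2 + s ^ 2) - s / (u ^ 2 + 1))) =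
        fun u => s * (u ^ a * (1 / (u ^ 2 + s ^ 2) - 1 / (u ^ 2 + 1))) := by
      ext u; ring
    rw [e, integral_const_mul, h3]
    refine ⟨h4.const_mul s, ?_⟩
    have : ell a |s| = ell a s := by simp [ell]
    rw [this]; ring

section
open scoped ComplexOrder

lemma inv_int {u : ℝ} (hu : 0 < u) (e t : ℝ) :
    ∫ y in Set.Ioi (0:ℝ), ((Real.exp (-u * y) : ℝ) : ℂ) * kerf (e * y) t =
      ((u : ℂ) + Complex.I * ((e * t : ℝ) : ℂ))⁻¹ := by
  have hre : (-((u : ℂ) + Complex.I * ((e * t : ℝ) : ℂ))).re < 0 := by simp [hu]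
  have := integral_exp_mul_complex_Ioi hre 0
  have e1 : ∀ y : ℝ, ((Real.exp (-u * y) : ℝ) : ℂ) * kerf (e * y) t =
      Complex.exp (-((u : ℂ) + Complex.I * ((e * t : ℝ) : ℂ)) * y) := by
    intro y
    rw [kerf, Complex.ofReal_exp, ← Complex.exp_add]; congr 1; push_cast; ring
  simp_rw [e1]
  rw [this]
  simp only [Complex.ofReal_zero, mul_zero, Complex.exp_zero]
  rw [neg_div_neg_eq, one_div]

lemma inv_mult {u : ℝ} (hu : 0 < u) (e : ℝ) :
    Mult (fun t : ℝ => ((u : ℂ) + Complex.I * ((e * t : ℝ) : ℂ))⁻¹) := by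
  simp_rw [← inv_int hu e]
  refine Mult.integral (Φ := fun y t => ((Real.exp (-u * y) : ℝ) : ℂ) * kerf (e * y) t)
    (b := fun y => Real.exp (-u * y)) ?_ ?_ ?_ ?_
  · apply Continuous.measurable
    unfold Function.uncurry kerf; fun_prop
  · exact integrableOn_exp_mul_Ioi (by linarith) 0
  · refine Eventually.of_forall fun y t => ?_
    rw [norm_mul, norm_ker, Complex.norm_real, Real.norm_of_nonneg (Real.exp_pos _).le, mul_one]
  · refine Eventually.of_forall fun y => ?_
    exact (Mult.const (Real.exp_pos _).le).mul (Mult.trans (e * y))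

lemma lap_integrable {u : ℝ} (hu : 0 < u) : Integrable (fun y : ℝ => Real.exp (-u * |y|)) := by
  have h := integrableOn_exp_mul_Ioi (a := -u) (by linarith) 0
  have h' := integrableOn_exp_mul_Iic (a := u) (by linarith) 0
  rw [← integrableOn_univ, ← Set.Iic_union_Ioi (a := (0:ℝ))]
  refine IntegrableOn.union ?_ ?_
  · refine h'.congr_fun (fun y hy => ?_) measurableSet_Iic
    simp only [abs_of_nonpos (Set.mem_Iic.1 hy)]
    simp
  · refine h.congr_fun (fun y hy => ?_) measurableSet_Ioi
    simp only [abs_of_pos (Set.mem_Ioi.1 hy)]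

lemma lap_int {u : ℝ} (hu : 0 < u) (t : ℝ) :
    ∫ y : ℝ, ((Real.exp (-u * |y|) : ℝ) : ℂ) * kerf y t =
      ((2 * u / (u ^ 2 + t ^ 2) : ℝ) : ℂ) := by
  have hi : Integrable (fun y : ℝ => ((Real.exp (-u * |y|) : ℝ) : ℂ) * kerf y t) := by
    refine (lap_integrable hu).mono' ?_ ?_
    · apply Continuous.aestronglyMeasurable
      unfold kerf; fun_prop
    · refine Eventually.of_forall fun y => ?_
      rw [norm_mul, norm_ker, Complex.norm_real, Real.norm_of_nonneg (Real.exp_pos _).le, mul_one]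
  rw [← intervalIntegral.integral_Iic_add_Ioi (b := 0) hi.integrableOn hi.integrableOn]
  have h1 : ∫ y in Set.Ioi (0:ℝ), ((Real.exp (-u * |y|) : ℝ) : ℂ) * kerf y t =
      ((u : ℂ) + Complex.I * ((1 * t : ℝ) : ℂ))⁻¹ := by
    rw [← inv_int hu 1 t]
    refine setIntegral_congr_fun measurableSet_Ioi fun y hy => ?_
    simp only [abs_of_pos (Set.mem_Ioi.1 hy), one_mul]
  have h2 : ∫ y in Set.Iic (0:ℝ), ((Real.exp (-u * |y|) : ℝ) : ℂ) * kerf y t =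
      ((u : ℂ) + Complex.I * ((-1 * t : ℝ) : ℂ))⁻¹ := by
    rw [← inv_int hu (-1) t]
    have := integral_comp_neg_Iic 0 (fun y => ((Real.exp (-u * y) : ℝ) : ℂ) * kerf (-1 * y) t)
    rw [neg_zero] at this
    rw [← this]
    refine setIntegral_congr_fun measurableSet_Iic fun y hy => ?_
    simp only [abs_of_nonpos (Set.mem_Iic.1 hy)]
    simp
  rw [h1, h2]
  have n1 : (u : ℂ) + Complex.I * ((1 * t : ℝ) : ℂ) ≠ 0 := fun h => by
    have := congrArg Complex.re h; simp at this; linarith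
  have n2 : (u : ℂ) + Complex.I * ((-1 * t : ℝ) : ℂ) ≠ 0 := fun h => by
    have := congrArg Complex.re h; simp at this; linarith
  have n3 : (u : ℂ)^2 + t^2 ≠ 0 := by
    have : (u^2+t^2 : ℝ) ≠ 0 := by positivity
    exact_mod_cast this
  push_cast at n1 n2 ⊢
  rw [one_mul] at n1 ⊢
  rw [neg_one_mul] at n2 ⊢
  rw [inv_add_inv n2 n1, div_eq_div_iff (mul_ne_zero n2 n1) n3]
  have := Complex.I_sq
  linear_combination (2 * (u:ℂ) * (t:ℂ)^2) * this

end

section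
open scoped ComplexOrder

noncomputable def chi (κ A u : ℝ) : ℝ := Set.indicator (Set.Iic 1) (fun u => κ * u ^ A) u
noncomputable def wP (a b κ A e u : ℝ) : ℝ := (1 + e * b) / 2 * (u ^ a / KK a) - chi κ A u
noncomputable def Er (a κ A t u : ℝ) : ℝ := (u ^ a / KK a - 2 * chi κ A u) * (u / (u ^ 2 + t ^ 2) - 1 / u)
noncomputable def Ei (a b t u : ℝ) : ℝ := b / KK a * (u ^ a * (t / (u ^ 2 + t ^ 2) - t / (u ^ 2 + 1)))
noncomputable def nh (κ A t : ℝ) : ℝ := ∫ u in Set.Ioc (0:ℝ) 1, κ * u ^ A * (2 * u / (u ^ 2 + t ^ 2))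
noncomputable def phi1 (a b κ A t : ℝ) : ℂ :=
  Complex.exp (Psi a b t - (nh κ A t : ℂ) + (nh κ A 0 : ℂ))

lemma measurable_chi (κ A : ℝ) : Measurable (chi κ A) := by
  unfold chi
  exact Measurable.indicator (by fun_prop) measurableSet_Iic

lemma measurable_wP (a b κ A e : ℝ) : Measurable (wP a b κ A e) := by
  have := measurable_chi κ A
  unfold wP; fun_prop

lemma chi_le {a b κ A u : ℝ} (h0 : 0 < a) (h2 : a < 2) (hA : a ≤ A) (hk0 : 0 ≤ κ)
    (hb : |b| < 1) (hk : κ ≤ (1 - |b|) / (2 * KK a)) (hu : 0 < u) :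
    0 ≤ chi κ A u ∧ chi κ A u ≤ (1 - |b|) / 2 * (u ^ a / KK a) := by
  have hK := KK_pos h0 h2
  have hb' : 0 < 1 - |b| := by linarith
  unfold chi
  by_cases h : u ≤ 1
  · rw [Set.indicator_of_mem (by exact h)]
    refine ⟨by positivity, ?_⟩
    calc κ * u ^ A ≤ (1 - |b|) / (2 * KK a) * u ^ a := by
          apply mul_le_mul hk _ (by positivity) (by positivity)
          exact Real.rpow_le_rpow_of_exponent_ge hu h hA
      _ = _ := by field_simp
  · rw [Set.indicator_of_notMem (by exact h)]
    exact ⟨le_rfl, by positivity⟩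

lemma wP_nonneg {a b κ A u e : ℝ} (h0 : 0 < a) (h2 : a < 2) (hA : a ≤ A) (hk0 : 0 ≤ κ)
    (hb : |b| < 1) (hk : κ ≤ (1 - |b|) / (2 * KK a)) (he : e = 1 ∨ e = -1) (hu : 0 < u) :
    0 ≤ wP a b κ A e u ∧ wP a b κ A e u ≤ u ^ a / KK a := by
  obtain ⟨c0, c1⟩ := chi_le h0 h2 hA hk0 hb hk hu
  have hK := KK_pos h0 h2
  have hP : 0 ≤ u ^ a / KK a := by positivity
  obtain ⟨b1, b2⟩ := abs_le.1 (le_refl |b|)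
  unfold wP
  have hb1 : -1 ≤ b := by linarith
  have hb2 : b ≤ 1 := by linarith
  rcases he with rfl | rfl
  · constructor <;> nlinarith
  · constructor <;> nlinarith

lemma nh_integrable {κ A : ℝ} (hA : 0 < A) (hk0 : 0 ≤ κ) (t : ℝ) :
    IntegrableOn (fun u : ℝ => κ * u ^ A * (2 * u / (u ^ 2 + t ^ 2))) (Set.Ioc 0 1) := by
  have h : IntegrableOn (fun u : ℝ => 2 * κ * u ^ (A - 1)) (Set.Ioc 0 1) := by
    have := (intervalIntegral.intervalIntegrable_rpow' (a := 0) (b := 1) (r := A - 1) (by linarith))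
    rw [intervalIntegrable_iff_integrableOn_Ioc_of_le zero_le_one] at this
    exact this.const_mul _
  refine Integrable.mono' h ?_ ?_
  · apply Measurable.aestronglyMeasurable; fun_prop
  · refine (ae_restrict_mem measurableSet_Ioc).mono fun u hu => ?_
    have hu0 : 0 < u := hu.1
    rw [Real.norm_of_nonneg (by positivity), Real.rpow_sub_one hu0.ne']
    have : 2 * u / (u ^ 2 + t ^ 2) ≤ 2 / u := by
      rw [div_le_div_iff₀ (by positivity) hu0]; nlinarith [sq_nonneg t]
    calc _ ≤ κ * u ^ A * (2 / u) := by gcongr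
      _ = _ := by ring

lemma Er_int {a κ A : ℝ} (h0 : 0 < a) (h2 : a < 2) (hA : 0 < A) (hk0 : 0 ≤ κ) (t : ℝ) :
    IntegrableOn (Er a κ A t) (Set.Ioi 0) ∧
    ∫ u in Set.Ioi (0:ℝ), Er a κ A t u = -|t| ^ a - nh κ A t + nh κ A 0 := by
  have hK := KK_pos h0 h2
  obtain ⟨i1, e1⟩ := levy_re h0 h2 t
  have i2 := nh_integrable hA hk0 t
  have i3 := nh_integrable hA hk0 0
  have hs : Set.Ioc (0:ℝ) 1 = Set.Iic 1 ∩ Set.Ioi 0 := by ext; simp [and_comm]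
  have i4 := i2.sub i3
  have i5 : IntegrableOn (fun u : ℝ => 2 * chi κ A u * (u / (u ^ 2 + t ^ 2) - 1 / u)) (Set.Ioi 0) ∧
     ∫ u in Set.Ioi (0:ℝ), 2 * chi κ A u * (u / (u ^ 2 + t ^ 2) - 1 / u) = nh κ A t - nh κ A 0 := by
    have : Set.EqOn (fun u : ℝ => 2 * chi κ A u * (u / (u ^ 2 + t ^ 2) - 1 / u))
      (Set.indicator (Set.Iic 1) (fun u => κ * u ^ A * (2 * u / (u ^ 2 + t ^ 2)) - κ * u ^ A * (2 * u / (u ^ 2 + 0 ^ 2))))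
      (Set.Ioi 0) := by
      intro u hu
      have hu0 : 0 < u := hu
      unfold chi
      by_cases h : u ≤ 1
      · simp only [Set.indicator_of_mem (show u ∈ Set.Iic (1:ℝ) from h)]
        have : 2 * u / (u ^ 2 + 0 ^ 2) = 2 / u := by field_simp; ring
        rw [this]; ring
      · simp only [Set.indicator_of_notMem (show u ∉ Set.Iic (1:ℝ) from h)]; simp
    constructor
    · refine IntegrableOn.congr_fun ?_ this.symm measurableSet_Ioi
      rw [IntegrableOn, integrable_indicator_iff measurableSet_Iic, IntegrableOn, Measure.restrict_restrict measurableSet_Iic, ← hs]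
      exact i4
    · rw [setIntegral_congr_fun measurableSet_Ioi this, setIntegral_indicator measurableSet_Iic, Set.inter_comm, ← hs, integral_sub i2 i3]
      rfl
  have e : Er a κ A t = fun u => (1 / KK a) * (u ^ a * (u / (u ^ 2 + t ^ 2) - 1 / u)) -
      2 * chi κ A u * (u / (u ^ 2 + t ^ 2) - 1 / u) := by
    ext u; unfold Er; ring
  rw [e]
  refine ⟨(i1.const_mul _).sub i5.1, ?_⟩
  rw [integral_sub (i1.const_mul _) i5.1, i5.2, integral_const_mul, e1]
  field_simp; ring

lemma Ei_int {a b : ℝ} (h0 : 0 < a) (h2 : a < 2) (t : ℝ) :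
    IntegrableOn (Ei a b t) (Set.Ioi 0) ∧
    ∫ u in Set.Ioi (0:ℝ), Ei a b t u = b * Tr a * (t * ell a t) := by
  have hK := KK_pos h0 h2
  obtain ⟨i1, e1⟩ := levy_im h0 h2 t
  unfold Ei
  refine ⟨i1.const_mul _, ?_⟩
  rw [integral_const_mul, e1]; field_simp

lemma Er_nonpos {a b κ A u : ℝ} (h0 : 0 < a) (h2 : a < 2) (hA : a ≤ A) (hk0 : 0 ≤ κ)
    (hb : |b| < 1) (hk : κ ≤ (1 - |b|) / (2 * KK a)) (t : ℝ) (hu : 0 < u) : Er a κ A t u ≤ 0 := by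
  obtain ⟨c0, c1⟩ := chi_le h0 h2 hA hk0 hb hk hu
  have hK := KK_pos h0 h2
  have hP : 0 ≤ u ^ a / KK a := by positivity
  unfold Er
  apply mul_nonpos_of_nonneg_of_nonpos
  · have := abs_nonneg b; nlinarith
  · rw [sub_nonpos, div_le_div_iff₀ (by positivity) hu]; nlinarith [sq_nonneg t]

end

section
open scoped ComplexOrder

noncomputable def eX (a b κ A t u : ℝ) : ℂ :=
  (wP a b κ A 1 u : ℂ) * ((u : ℂ) + Complex.I * ((-1 * t : ℝ) : ℂ))⁻¹ +
  (wP a b κ A (-1) u : ℂ) * ((u : ℂ) + Complex.I * ((1 * t : ℝ) : ℂ))⁻¹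

lemma eX_meas (a b κ A : ℝ) : Measurable (Function.uncurry fun u t => eX a b κ A t u) := by
  have := measurable_wP a b κ A 1
  have := measurable_wP a b κ A (-1)
  unfold eX Function.uncurry; fun_prop

lemma inv_norm_le {u : ℝ} (hu : 0 < u) (s : ℝ) : ‖((u : ℂ) + Complex.I * (s : ℂ))⁻¹‖ ≤ u⁻¹ := by
  rw [norm_inv]
  apply inv_anti₀ hu
  have := Complex.abs_re_le_norm ((u : ℂ) + Complex.I * (s : ℂ))
  simp [abs_of_pos hu] at this
  exact this

lemma eX_bound {a b κ A u : ℝ} (h0 : 0 < a) (h2 : a < 2) (hA : a ≤ A) (hk0 : 0 ≤ κ)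
    (hb : |b| < 1) (hk : κ ≤ (1 - |b|) / (2 * KK a)) (hu : 0 < u) (t : ℝ) :
    ‖eX a b κ A t u‖ ≤ 2 / KK a * u ^ (a - 1) := by
  have hK := KK_pos h0 h2
  obtain ⟨p0, p1⟩ := wP_nonneg h0 h2 hA hk0 hb hk (Or.inl rfl) hu
  obtain ⟨q0, q1⟩ := wP_nonneg h0 h2 hA hk0 hb hk (Or.inr rfl) hu
  unfold eX
  refine (norm_add_le _ _).trans ?_
  rw [norm_mul, norm_mul, Complex.norm_real, Complex.norm_real, Real.norm_of_nonneg p0, Real.norm_of_nonneg q0,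
    Real.rpow_sub_one hu.ne']
  calc _ ≤ u ^ a / KK a * u⁻¹ + u ^ a / KK a * u⁻¹ := by
        gcongr
        · exact inv_norm_le hu _
        · exact inv_norm_le hu _
    _ = _ := by field_simp; ring

lemma rpow_int_Ioc {a : ℝ} (h0 : 0 < a) (R : ℝ) (c : ℝ) :
    IntegrableOn (fun u : ℝ => c * u ^ (a - 1)) (Set.Ioc 0 R) := by
  rcases le_total 0 R with hR | hR
  · have := (intervalIntegral.intervalIntegrable_rpow' (a := 0) (b := R) (r := a - 1) (by linarith))
    rw [intervalIntegrable_iff_integrableOn_Ioc_of_le hR] at this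
    exact this.const_mul _
  · rw [Set.Ioc_eq_empty (by linarith)]; exact integrableOn_empty

lemma eX_integrable {a b κ A : ℝ} (h0 : 0 < a) (h2 : a < 2) (hA : a ≤ A) (hk0 : 0 ≤ κ)
    (hb : |b| < 1) (hk : κ ≤ (1 - |b|) / (2 * KK a)) (R t : ℝ) :
    IntegrableOn (eX a b κ A t) (Set.Ioc 0 R) := by
  refine Integrable.mono' (rpow_int_Ioc h0 R (2 / KK a)) ?_ ?_
  · have h1 := measurable_wP a b κ A 1
    have h2 := measurable_wP a b κ A (-1)
    apply Measurable.aestronglyMeasurable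
    unfold eX; fun_prop
  · exact (ae_restrict_mem measurableSet_Ioc).mono fun u hu => eX_bound h0 h2 hA hk0 hb hk hu.1 t

lemma eX_mult {a b κ A : ℝ} (h0 : 0 < a) (h2 : a < 2) (hA : a ≤ A) (hk0 : 0 ≤ κ)
    (hb : |b| < 1) (hk : κ ≤ (1 - |b|) / (2 * KK a)) (R : ℝ) :
    Mult (fun t => ∫ u in Set.Ioc 0 R, eX a b κ A t u) := by
  refine Mult.integral (Φ := fun u t => eX a b κ A t u) (eX_meas a b κ A) (rpow_int_Ioc h0 R (2 / KK a)) ?_ ?_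
  · exact (ae_restrict_mem measurableSet_Ioc).mono fun u hu => eX_bound h0 h2 hA hk0 hb hk hu.1
  · refine (ae_restrict_mem measurableSet_Ioc).mono fun u hu => ?_
    obtain ⟨p0, p1⟩ := wP_nonneg h0 h2 hA hk0 hb hk (Or.inl rfl) hu.1
    obtain ⟨q0, q1⟩ := wP_nonneg h0 h2 hA hk0 hb hk (Or.inr rfl) hu.1
    exact ((Mult.const p0).mul (inv_mult hu.1 _)).add ((Mult.const q0).mul (inv_mult hu.1 _))

lemma eX_eq {a b κ A u : ℝ} (hK : KK a ≠ 0) (hu : 0 < u) (t : ℝ) :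
    eX a b κ A t u - eX a b κ A 0 u - Complex.I * (t:ℂ) * ((b / KK a * (u ^ a / (u ^ 2 + 1)) : ℝ) : ℂ) =
    (Er a κ A t u : ℂ) + Complex.I * (Ei a b t u : ℂ) := by
  have n1 : (u : ℂ) + Complex.I * ((1 * t : ℝ) : ℂ) ≠ 0 := fun h => by
    have := congrArg Complex.re h; simp at this; linarith
  have n2 : (u : ℂ) + Complex.I * ((-1 * t : ℝ) : ℂ) ≠ 0 := fun h => by
    have := congrArg Complex.re h; simp at this; linarith
  have n3 : (u : ℂ)^2 + t^2 ≠ 0 := by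
    have : (u^2+t^2 : ℝ) ≠ 0 := by positivity
    exact_mod_cast this
  have n4 : (u : ℂ)^2 + 1 ≠ 0 := by
    have : (u^2+1 : ℝ) ≠ 0 := by positivity
    exact_mod_cast this
  have n5 : (u : ℂ) ≠ 0 := by exact_mod_cast hu.ne'
  have i1 : ((u : ℂ) + Complex.I * ((1 * t : ℝ) : ℂ))⁻¹ = (u - Complex.I * t) / (u^2 + t^2) := by
    rw [inv_eq_one_div, div_eq_div_iff n1 n3]; push_cast
    linear_combination ((t:ℂ)^2) * Complex.I_sq
  have i2 : ((u : ℂ) + Complex.I * ((-1 * t : ℝ) : ℂ))⁻¹ = (u + Complex.I * t) / (u^2 + t^2) := by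
    rw [inv_eq_one_div, div_eq_div_iff n2 n3]; push_cast
    linear_combination ((t:ℂ)^2) * Complex.I_sq
  unfold eX
  rw [i1, i2]
  simp only [mul_zero, Complex.ofReal_zero, add_zero]
  unfold Er Ei wP
  push_cast
  have hK' : (KK a : ℂ) ≠ 0 := by exact_mod_cast hK
  field_simp
  ring

lemma exponent_eq {a b κ A : ℝ} (h0 : 0 < a) (h2 : a < 2) (hA : a ≤ A) (hk0 : 0 ≤ κ)
    (hb : |b| < 1) (hk : κ ≤ (1 - |b|) / (2 * KK a)) (R t : ℝ) :
    (∫ u in Set.Ioc 0 R, eX a b κ A t u) - (∫ u in Set.Ioc 0 R, eX a b κ A 0 u) -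
      Complex.I * (t:ℂ) * ((∫ u in Set.Ioc 0 R, b / KK a * (u ^ a / (u ^ 2 + 1)) : ℝ) : ℂ) =
    ((∫ u in Set.Ioc 0 R, Er a κ A t u : ℝ) : ℂ) + Complex.I * ((∫ u in Set.Ioc 0 R, Ei a b t u : ℝ) : ℂ) := by
  have hK := KK_pos h0 h2
  have hsub : Set.Ioc (0:ℝ) R ⊆ Set.Ioi 0 := fun u hu => hu.1
  have j1 := (Er_int (κ := κ) h0 h2 (h0.trans_le hA) hk0 t).1.mono_set hsub
  have j2 := (Ei_int (b := b) h0 h2 t).1.mono_set hsub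
  have i1 := eX_integrable h0 h2 hA hk0 hb hk R t
  have i2 := eX_integrable h0 h2 hA hk0 hb hk R 0
  have i3 : IntegrableOn (fun u : ℝ => b / KK a * (u ^ a / (u ^ 2 + 1))) (Set.Ioc 0 R) := by
    refine Integrable.mono' (rpow_int_Ioc h0 R (|b| / KK a)) ?_ ?_
    · apply Measurable.aestronglyMeasurable; fun_prop
    · refine (ae_restrict_mem measurableSet_Ioc).mono fun u hu => ?_
      have hu0 : 0 < u := hu.1
      rw [norm_mul, Real.norm_of_nonneg (show 0 ≤ u ^ a / (u ^ 2 + 1) by positivity), Real.norm_eq_abs, abs_div, abs_of_pos hK,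
        Real.rpow_sub_one hu0.ne']
      gcongr
      nlinarith [sq_nonneg (u - 1)]
  rw [← integral_complex_ofReal, ← integral_complex_ofReal, ← integral_complex_ofReal, ← integral_const_mul,
    ← integral_const_mul, ← integral_sub i1 i2]
  have i12 : IntegrableOn (fun u => eX a b κ A t u - eX a b κ A 0 u) (Set.Ioc 0 R) := i1.sub i2
  have i3' : IntegrableOn (fun u : ℝ => Complex.I * (t:ℂ) * ((b / KK a * (u ^ a / (u ^ 2 + 1)) : ℝ) : ℂ)) (Set.Ioc 0 R) :=
    i3.ofReal.const_mul _
  have j1' : IntegrableOn (fun u : ℝ => (Er a κ A t u : ℂ)) (Set.Ioc 0 R) := j1.ofReal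
  have j2' : IntegrableOn (fun u : ℝ => Complex.I * (Ei a b t u : ℂ)) (Set.Ioc 0 R) := j2.ofReal.const_mul _
  rw [← integral_sub i12 i3', ← integral_add j1' j2']
  refine setIntegral_congr_fun measurableSet_Ioc fun u hu => ?_
  exact eX_eq hK.ne' hu.1 t

lemma phi1_mult {a b κ A : ℝ} (h0 : 0 < a) (h2 : a < 2) (hA : a ≤ A) (hk0 : 0 ≤ κ)
    (hb : |b| < 1) (hk : κ ≤ (1 - |b|) / (2 * KK a)) : Mult (phi1 a b κ A) := by
  obtain ⟨y, hy⟩ : ∃ y : ℕ → ℝ, ∀ n, y n = ∫ u in Set.Ioc (0:ℝ) n, b / KK a * (u ^ a / (u ^ 2 + 1)) :=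
    ⟨_, fun n => rfl⟩
  have hre : ∀ R : ℝ, (((∫ u in Set.Ioc 0 R, eX a b κ A 0 u).re : ℝ) : ℂ) = ∫ u in Set.Ioc 0 R, eX a b κ A 0 u := by
    intro R
    have : ∀ u, eX a b κ A 0 u = (((wP a b κ A 1 u) * u⁻¹ + (wP a b κ A (-1) u) * u⁻¹ : ℝ) : ℂ) := by
      intro u; unfold eX; simp
    simp_rw [this]
    rw [integral_complex_ofReal, Complex.ofReal_re]
  have key : ∀ (n : ℕ) t, Complex.exp (∫ u in Set.Ioc (0:ℝ) n, eX a b κ A t u) *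
      (Real.exp (-(∫ u in Set.Ioc (0:ℝ) n, eX a b κ A 0 u).re) : ℂ) * kerf (y n) t =
      Complex.exp (((∫ u in Set.Ioc (0:ℝ) n, Er a κ A t u : ℝ) : ℂ) + Complex.I * ((∫ u in Set.Ioc (0:ℝ) n, Ei a b t u : ℝ) : ℂ)) := by
    intro n t
    rw [← exponent_eq h0 h2 hA hk0 hb hk n t, kerf, hy, Complex.ofReal_exp, Complex.ofReal_neg, hre, ← Complex.exp_add, ← Complex.exp_add]
    congr 1; push_cast; ring
  refine Mult.lim (Φ := fun n t => Complex.exp (∫ u in Set.Ioc (0:ℝ) n, eX a b κ A t u) *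
      (Real.exp (-(∫ u in Set.Ioc (0:ℝ) n, eX a b κ A 0 u).re) : ℂ) * kerf (y n) t) (C := 1) ?_ ?_ ?_
  · intro n
    exact ((eX_mult h0 h2 hA hk0 hb hk n).exp.mul (Mult.const (Real.exp_pos _).le)).mul (Mult.trans _)
  · intro n t
    rw [key, Complex.norm_exp]
    simp only [Complex.add_re, Complex.ofReal_re, Complex.mul_re, Complex.I_re, zero_mul, Complex.I_im, Complex.ofReal_im, mul_zero, sub_zero, add_zero]
    rw [Real.exp_le_one_iff]
    exact setIntegral_nonpos measurableSet_Ioc fun u hu => Er_nonpos h0 h2 hA hk0 hb hk t hu.1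
  · intro t
    simp_rw [key]
    obtain ⟨i1, e1⟩ := Er_int (κ := κ) h0 h2 (h0.trans_le hA) hk0 t
    obtain ⟨i2, e2⟩ := Ei_int (b := b) h0 h2 t
    have l1 := intervalIntegral_tendsto_integral_Ioi 0 i1 (tendsto_natCast_atTop_atTop (R := ℝ))
    have l2 := intervalIntegral_tendsto_integral_Ioi 0 i2 (tendsto_natCast_atTop_atTop (R := ℝ))
    simp_rw [intervalIntegral.integral_of_le (Nat.cast_nonneg _)] at l1 l2
    rw [e1] at l1; rw [e2] at l2
    have : phi1 a b κ A t = Complex.exp (((-|t| ^ a - nh κ A t + nh κ A 0 : ℝ) : ℂ) + Complex.I * ((b * Tr a * (t * ell a t) : ℝ) : ℂ)) := by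
      unfold phi1 Psi; congr 1; push_cast; ring
    rw [this]
    refine (Complex.continuous_exp.tendsto _).comp ?_
    exact ((Complex.continuous_ofReal.tendsto _).comp l1).add (((Complex.continuous_ofReal.tendsto _).comp l2).const_mul _)

end

section
open scoped ComplexOrder

lemma log_pow_bound {a e α s : ℝ} (he : 0 < e) (h1 : a + 2 * e ≤ 1) (h2 : a + 2 * e ≤ α) (ha : 0 ≤ a)
    (hα : α ≤ 2) (hs : 0 < s) :
    (1 + |Real.log s|) ^ 2 * (s + s ^ α) ≤ 2 * (1 + 1 / e) ^ 2 * (s ^ a * (1 + s) ^ 4) := by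
  rcases le_total s 1 with h | h
  · have k1 := (Real.abs_log_mul_self_rpow_lt s e hs h he).le
    rw [abs_mul, abs_of_pos (Real.rpow_pos_of_pos hs e)] at k1
    have k2 : s ^ e ≤ 1 := Real.rpow_le_one hs.le h he.le
    have k3 : (1 + |Real.log s|) * s ^ e ≤ 1 + 1 / e := by nlinarith
    have k4 : s ≤ s ^ (a + 2 * e) := by
      calc s = s ^ (1:ℝ) := (Real.rpow_one s).symm
        _ ≤ _ := Real.rpow_le_rpow_of_exponent_ge hs h h1
    have k5 : s ^ α ≤ s ^ (a + 2 * e) := Real.rpow_le_rpow_of_exponent_ge hs h h2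
    have k6 : s ^ (a + 2 * e) = s ^ a * (s ^ e) ^ 2 := by
      rw [Real.rpow_add hs, mul_comm 2 e, Real.rpow_mul hs.le]; norm_cast
    have k7 : ((1 + |Real.log s|) * s ^ e) ^ 2 ≤ (1 + 1 / e) ^ 2 := by
      apply pow_le_pow_left₀ (by positivity) k3
    have k8 : (1:ℝ) ≤ (1 + s) ^ 4 := one_le_pow₀ (by linarith)
    calc (1 + |Real.log s|) ^ 2 * (s + s ^ α) ≤ (1 + |Real.log s|) ^ 2 * (2 * (s ^ a * (s ^ e) ^ 2)) := by
          rw [← k6]; gcongr; linarith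
      _ = 2 * ((1 + |Real.log s|) * s ^ e) ^ 2 * (s ^ a * 1) := by ring
      _ ≤ _ := by gcongr
  · have k1 : |Real.log s| ≤ s - 1 := by
      rw [abs_of_nonneg (Real.log_nonneg h)]; exact Real.log_le_sub_one_of_pos hs
    have k2 : s ^ α ≤ s ^ 2 := by
      calc s ^ α ≤ s ^ (2:ℝ) := Real.rpow_le_rpow_of_exponent_le h hα
        _ = s ^ 2 := by norm_cast
    have k3 : (1:ℝ) ≤ s ^ a := Real.one_le_rpow h ha
    have k4 : (1:ℝ) ≤ (1 + 1 / e) ^ 2 := one_le_pow₀ (by simp [he.le])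
    calc (1 + |Real.log s|) ^ 2 * (s + s ^ α) ≤ s ^ 2 * (s ^ 2 + s ^ 2) := by
          gcongr
          · linarith
          · nlinarith
      _ = 2 * 1 * (1 * s ^ 4) := by ring
      _ ≤ _ := by
          gcongr
          linarith

lemma exp_rpow_bound {α1 : ℝ} (h1 : 0 < α1) (N : ℕ) : ∃ D : ℝ, 0 < D ∧ ∀ α, α1 ≤ α → ∀ s : ℝ, 0 ≤ s →
    Real.exp (-(s ^ α)) ≤ D / (1 + s) ^ N := by
  obtain ⟨k, hk⟩ := exists_nat_ge (N / α1)
  rw [div_le_iff₀ h1] at hk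
  refine ⟨k.factorial * 2 ^ N, by positivity, fun α hα s hs => ?_⟩
  rw [le_div_iff₀ (by positivity)]
  have hf : (1:ℝ) ≤ k.factorial := by exact_mod_cast Nat.one_le_iff_ne_zero.2 (Nat.factorial_ne_zero k)
  rcases le_total s 1 with h | h
  · calc Real.exp (-(s ^ α)) * (1 + s) ^ N ≤ 1 * 2 ^ N := by
          gcongr
          · rw [Real.exp_le_one_iff]; have : 0 ≤ s ^ α := by positivity
            linarith
          · linarith
      _ ≤ _ := by gcongr
  · have hs0 : 0 < s := by linarith
    have e1 : (s ^ α) ^ k / k.factorial ≤ Real.exp (s ^ α) := Real.pow_div_factorial_le_exp _ (by positivity) k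
    have e2 : s ^ N ≤ (s ^ α) ^ k := by
      calc s ^ N = s ^ (N:ℝ) := by norm_cast
        _ ≤ s ^ (α * k) := by
            apply Real.rpow_le_rpow_of_exponent_le h
            calc (N:ℝ) ≤ k * α1 := hk
              _ ≤ k * α := by gcongr
              _ = α * k := mul_comm _ _
        _ = _ := by rw [Real.rpow_mul hs, Real.rpow_natCast]
    rw [Real.exp_neg, inv_mul_le_iff₀ (Real.exp_pos _)]
    rw [div_le_iff₀ (by positivity)] at e1
    calc (1 + s) ^ N ≤ (2 * s) ^ N := by gcongr; linarith
      _ = 2 ^ N * s ^ N := mul_pow _ _ _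
      _ ≤ 2 ^ N * (Real.exp (s ^ α) * k.factorial) := by gcongr; exact e2.trans e1
      _ = _ := by ring

lemma int_inv_sq : Integrable (fun t : ℝ => 1 / (1 + |t|) ^ 2) := by
  have := integrable_one_add_norm (E := ℝ) (μ := volume) (r := 2) (by simp)
  refine this.congr (Eventually.of_forall fun t => ?_)
  simp only [Real.norm_eq_abs]
  rw [Real.rpow_neg (by positivity), one_div]; norm_cast

lemma exp_rpow_int {a : ℝ} (h0 : 0 < a) : Integrable (fun t : ℝ => Real.exp (-(|t| ^ a))) := by
  obtain ⟨D, hD, h⟩ := exp_rpow_bound h0 2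
  refine Integrable.mono' (int_inv_sq.const_mul D) ?_ ?_
  · apply Measurable.aestronglyMeasurable; fun_prop
  · refine Eventually.of_forall fun t => ?_
    rw [Real.norm_of_nonneg (Real.exp_pos _).le]
    have := h a le_rfl |t| (abs_nonneg t)
    rwa [mul_one_div]

lemma nh_nonneg {κ A : ℝ} (hk0 : 0 ≤ κ) (t : ℝ) : 0 ≤ nh κ A t := by
  unfold nh
  apply setIntegral_nonneg measurableSet_Ioc
  intro u hu
  have : 0 < u := hu.1
  positivity

lemma norm_phi1 {a b κ A : ℝ} (hk0 : 0 ≤ κ) (t : ℝ) :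
    ‖phi1 a b κ A t‖ ≤ Real.exp (nh κ A 0) * Real.exp (-(|t| ^ a)) := by
  rw [phi1, Complex.norm_exp, ← Real.exp_add, Real.exp_le_exp]
  simp only [Complex.add_re, Complex.sub_re, Complex.ofReal_re, Psi_re]
  have := nh_nonneg (A := A) hk0 t
  linarith

lemma phi1_integrable {a b κ A : ℝ} (h0 : 0 < a) (h2 : a < 2) (hA : a ≤ A) (hk0 : 0 ≤ κ)
    (hb : |b| < 1) (hk : κ ≤ (1 - |b|) / (2 * KK a)) : Integrable (phi1 a b κ A) := by
  refine Integrable.mono' ((exp_rpow_int h0).const_mul (Real.exp (nh κ A 0)))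
    (phi1_mult h0 h2 hA hk0 hb hk).1.aestronglyMeasurable (Eventually.of_forall fun t => norm_phi1 hk0 t)

lemma gauss_FT {e : ℝ} (he : 0 < e) (x : ℝ) : 0 ≤ FT (fun t => Complex.exp (-(e:ℂ) * (t:ℂ) ^ 2)) x := by
  have h := fourierIntegral_gaussian (b := (e:ℂ)) (by simpa using he) (-(x:ℂ))
  have : FT (fun t => Complex.exp (-(e:ℂ) * (t:ℂ) ^ 2)) x =
      (((Real.pi / e) ^ (1/2 : ℝ) * Real.exp (- x ^ 2 / (4 * e)) : ℝ) : ℂ) := by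
    unfold FT kerf
    rw [Complex.ofReal_mul, Complex.ofReal_cpow (by positivity), Complex.ofReal_exp]
    push_cast
    convert h using 2
    · ext t; congr 2; push_cast; ring
    · simp
  rw [this]
  exact Complex.zero_le_real.2 (by positivity)

lemma phi1_FT {a b κ A : ℝ} (h0 : 0 < a) (h2 : a < 2) (hA : a ≤ A) (hk0 : 0 ≤ κ)
    (hb : |b| < 1) (hk : κ ≤ (1 - |b|) / (2 * KK a)) (x : ℝ) : 0 ≤ FT (phi1 a b κ A) x := by
  have hm := phi1_mult h0 h2 hA hk0 hb hk
  have hi := phi1_integrable h0 h2 hA hk0 hb hk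
  have hp : ∀ n : ℕ, (0:ℝ) < 1 / ((n:ℝ) + 1) := fun n => by positivity
  have hg : ∀ n : ℕ, Integrable (fun t : ℝ => Complex.exp (-((1 / ((n:ℝ) + 1) : ℝ):ℂ) * (t:ℂ) ^ 2)) := fun n =>
    integrable_cexp_neg_mul_sq (by rw [Complex.ofReal_re]; exact hp n)
  have hl : Tendsto (fun n : ℕ => FT (fun t => phi1 a b κ A t * Complex.exp (-((1 / ((n:ℝ) + 1) : ℝ):ℂ) * (t:ℂ) ^ 2)) x)
      atTop (nhds (FT (phi1 a b κ A) x)) := by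
    unfold FT
    apply tendsto_integral_of_dominated_convergence (fun t => ‖phi1 a b κ A t‖)
    · exact fun n => (ker_integrable (hm.integrable (hg n)) x).aestronglyMeasurable
    · exact hi.norm
    · intro n
      refine Eventually.of_forall fun t => ?_
      rw [norm_mul, norm_mul, norm_ker, one_mul]
      refine mul_le_of_le_one_right (norm_nonneg _) ?_
      rw [Complex.norm_exp, Real.exp_le_one_iff]
      have : (-((1 / ((n:ℝ) + 1) : ℝ):ℂ) * (t:ℂ) ^ 2) = ((-(1 / ((n:ℝ) + 1) * t ^ 2) : ℝ) : ℂ) := by push_cast; ring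
      rw [this, Complex.ofReal_re]
      have := hp n
      have : 0 ≤ 1 / ((n:ℝ) + 1) * t ^ 2 := by positivity
      linarith
    · refine Eventually.of_forall fun t => ?_
      refine Tendsto.const_mul _ ?_
      have : Tendsto (fun n : ℕ => Complex.exp (-((1 / ((n:ℝ) + 1) : ℝ):ℂ) * (t:ℂ) ^ 2)) atTop
          (nhds (Complex.exp (-((0:ℝ):ℂ) * (t:ℂ) ^ 2))) := by
        refine (Complex.continuous_exp.tendsto _).comp ?_
        exact (((Complex.continuous_ofReal.tendsto _).comp tendsto_one_div_add_atTop_nhds_zero_nat).neg).mul_const _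
      simpa using this.const_mul (phi1 a b κ A t)
  exact ge_of_tendsto hl (Eventually.of_forall fun n => hm.2.2 _ (hg n) (gauss_FT (hp n)) x)

end

section
open scoped ComplexOrder

lemma FT_continuous {G : ℝ → ℂ} (hG : Integrable G) : Continuous (FT G) := by
  unfold FT
  refine continuous_of_dominated (bound := fun t => ‖G t‖) (fun x => (ker_integrable hG x).aestronglyMeasurable)
    (fun x => Eventually.of_forall fun t => ?_) hG.norm (Eventually.of_forall fun t => ?_)
  · rw [norm_mul, norm_ker, one_mul]
  · exact (continuous_ker2.comp (continuous_id.prodMk continuous_const)).mul continuous_const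

lemma FT_norm_le {G : ℝ → ℂ} (x : ℝ) : ‖FT G x‖ ≤ ∫ t, ‖G t‖ := by
  unfold FT
  refine (norm_integral_le_integral_norm _).trans (le_of_eq ?_)
  congr 1; ext t; rw [norm_mul, norm_ker, one_mul]

lemma lap_mult {u : ℝ} (hu : 0 < u) : Mult (fun t : ℝ => ((2 * u / (u ^ 2 + t ^ 2) : ℝ) : ℂ)) := by
  simp_rw [← lap_int hu]
  refine Mult.integral (Φ := fun y t => ((Real.exp (-u * |y|) : ℝ) : ℂ) * kerf y t)
    (b := fun y => Real.exp (-u * |y|)) ?_ (lap_integrable hu) ?_ ?_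
  · apply Continuous.measurable
    unfold Function.uncurry kerf; fun_prop
  · refine Eventually.of_forall fun y t => ?_
    rw [norm_mul, norm_ker, Complex.norm_real, Real.norm_of_nonneg (Real.exp_pos _).le, mul_one]
  · exact Eventually.of_forall fun y => (Mult.const (Real.exp_pos _).le).mul (Mult.trans y)

noncomputable def DD (G : ℝ → ℂ) (u z : ℝ) : ℂ := FT (fun t => ((2 * u / (u ^ 2 + t ^ 2) : ℝ) : ℂ) * G t) z

lemma DD_eq {G : ℝ → ℂ} (hG : Integrable G) {u : ℝ} (hu : 0 < u) (z : ℝ) :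
    DD G u z = ∫ y, ((Real.exp (-u * |y - z|) : ℝ) : ℂ) * FT G y := by
  unfold DD
  simp_rw [← lap_int hu]
  rw [FT_integral (Φ := fun y t => ((Real.exp (-u * |y|) : ℝ) : ℂ) * kerf y t)
    (b := fun y => Real.exp (-u * |y|)) _ (lap_integrable hu) _ hG]
  · rw [← integral_add_right_eq_self (fun y => ((Real.exp (-u * |y - z|) : ℝ) : ℂ) * FT G y) z]
    congr 1; ext y
    simp only [add_sub_cancel_right]
    unfold FT
    rw [← integral_const_mul]
    congr 1; ext t
    rw [add_comm y z, ← ker_mul]; ring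
  · apply Continuous.measurable
    unfold Function.uncurry kerf; fun_prop
  · refine Eventually.of_forall fun y t => ?_
    rw [norm_mul, norm_ker, Complex.norm_real, Real.norm_of_nonneg (Real.exp_pos _).le, mul_one]

lemma DD_int {G : ℝ → ℂ} (hG : Integrable G) {u : ℝ} (hu : 0 < u) (z : ℝ) :
    Integrable (fun y => ((Real.exp (-u * |y - z|) : ℝ) : ℂ) * FT G y) := by
  refine Integrable.mul_bdd (c := ∫ t, ‖G t‖) ?_ (FT_continuous hG).aestronglyMeasurable
    (Eventually.of_forall fun y => FT_norm_le y)
  exact ((lap_integrable hu).comp_sub_right z).ofReal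

lemma DD_re {G : ℝ → ℂ} (hG : Integrable G) {u : ℝ} (hu : 0 < u) (z : ℝ) :
    (DD G u z).re = ∫ y, Real.exp (-u * |y - z|) * (FT G y).re := by
  have := integral_re (DD_int hG hu z)
  rw [DD_eq hG hu]
  refine Eq.trans this.symm ?_
  congr 1; ext y; exact Complex.re_ofReal_mul _ _

lemma DD_re_int {G : ℝ → ℂ} (hG : Integrable G) {u : ℝ} (hu : 0 < u) (z : ℝ) :
    Integrable (fun y => Real.exp (-u * |y - z|) * (FT G y).re) := by
  have := (DD_int hG hu z).re
  refine this.congr (Eventually.of_forall fun y => ?_)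
  exact Complex.re_ofReal_mul _ _

lemma DD_nonneg {G : ℝ → ℂ} (hG : Integrable G) (hp : ∀ x, 0 ≤ FT G x) {u : ℝ} (hu : 0 < u) (z : ℝ) :
    0 ≤ (DD G u z).re := by
  rw [DD_re hG hu]
  exact integral_nonneg fun y => mul_nonneg (Real.exp_pos _).le (Complex.le_def.1 (hp y)).1

lemma DD_ge {G : ℝ → ℂ} (hG : Integrable G) (hp : ∀ x, 0 ≤ FT G x) {u r : ℝ} (hu : 0 < u) (hr : r ≤ 1) (z : ℝ)
    (hur : u * (1 + |z|) ≤ r) :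
    Real.exp (-1) * (DD G r 0).re ≤ (DD G u z).re := by
  have hr0 : 0 < r := lt_of_lt_of_le (by positivity) hur
  rw [DD_re hG hu, DD_re hG hr0, ← integral_const_mul]
  refine integral_mono ((DD_re_int hG hr0 0).const_mul _) (DD_re_int hG hu z) fun y => ?_
  simp only
  rw [← mul_assoc, ← Real.exp_add]
  refine mul_le_mul_of_nonneg_right ?_ (Complex.le_def.1 (hp y)).1
  rw [Real.exp_le_exp, sub_zero]
  have h1 : |y - z| ≤ |y| + |z| := abs_sub _ _
  have h2 : u * |y| ≤ r * |y| := by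
    gcongr; nlinarith [abs_nonneg z]
  have h3 : u * |z| ≤ 1 := by nlinarith [abs_nonneg z]
  nlinarith

lemma nh_meas (κ A : ℝ) : Measurable (Function.uncurry fun u t : ℝ => ((κ * u ^ A * (2 * u / (u ^ 2 + t ^ 2)) : ℝ) : ℂ)) := by
  unfold Function.uncurry; fun_prop

lemma nh_bd {κ A u : ℝ} (hk0 : 0 ≤ κ) (hu : 0 < u) (t : ℝ) :
    ‖((κ * u ^ A * (2 * u / (u ^ 2 + t ^ 2)) : ℝ) : ℂ)‖ ≤ 2 * κ * u ^ (A - 1) := by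
  rw [Complex.norm_real, Real.norm_of_nonneg (by positivity), Real.rpow_sub_one hu.ne']
  have : 2 * u / (u ^ 2 + t ^ 2) ≤ 2 / u := by
    rw [div_le_div_iff₀ (by positivity) hu]; nlinarith [sq_nonneg t]
  calc _ ≤ κ * u ^ A * (2 / u) := by gcongr
      _ = _ := by ring

lemma nh_ofReal (κ A t : ℝ) : ((nh κ A t : ℝ) : ℂ) =
    ∫ u in Set.Ioc (0:ℝ) 1, ((κ * u ^ A * (2 * u / (u ^ 2 + t ^ 2)) : ℝ) : ℂ) := by
  unfold nh; rw [integral_complex_ofReal]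

lemma nh_mult {κ A : ℝ} (hA : 0 < A) (hk0 : 0 ≤ κ) : Mult (fun t => ((nh κ A t : ℝ) : ℂ)) := by
  simp_rw [nh_ofReal]
  refine Mult.integral (nh_meas κ A) (rpow_int_Ioc hA 1 (2 * κ)) ?_ ?_
  · exact (ae_restrict_mem measurableSet_Ioc).mono fun u hu => nh_bd hk0 hu.1
  · refine (ae_restrict_mem measurableSet_Ioc).mono fun u hu => ?_
    have hu0 : 0 < u := hu.1
    have := (Mult.const (c := κ * u ^ A) (by positivity)).mul (lap_mult hu0)
    simpa only [Complex.ofReal_mul] using this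

lemma FT_nh {κ A : ℝ} (hA : 0 < A) (hk0 : 0 ≤ κ) {G : ℝ → ℂ} (hG : Integrable G) (hp : ∀ x, 0 ≤ FT G x)
    {r : ℝ} (hr0 : 0 < r) (hr : r ≤ 1) (z : ℝ) :
    κ * Real.exp (-1) * ((r / (1 + |z|)) ^ (A + 1) / (A + 1)) * (DD G r 0).re ≤
      (FT (fun t => ((nh κ A t : ℝ) : ℂ) * G t) z).re := by
  simp_rw [nh_ofReal]
  rw [FT_integral (nh_meas κ A) (rpow_int_Ioc hA 1 (2 * κ))
    ((ae_restrict_mem measurableSet_Ioc).mono fun u hu => nh_bd hk0 hu.1) hG]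
  set F := fun u : ℝ => FT (fun t => ((κ * u ^ A * (2 * u / (u ^ 2 + t ^ 2)) : ℝ) : ℂ) * G t) z with hF
  have eF : ∀ u, F u = ((κ * u ^ A : ℝ) : ℂ) * DD G u z := by
    intro u; simp only [hF, DD, FT]; rw [← integral_const_mul]; congr 1; ext t; push_cast; ring
  have mF : AEStronglyMeasurable F (volume.restrict (Set.Ioc 0 1)) := by
    have h1 : AEStronglyMeasurable (fun q : ℝ × ℝ => kerf z q.2 * (((κ * q.1 ^ A * (2 * q.1 / (q.1 ^ 2 + q.2 ^ 2)) : ℝ) : ℂ) * G q.2))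
        ((volume.restrict (Set.Ioc (0:ℝ) 1)).prod volume) := by
      refine ((continuous_ker z).comp continuous_snd).aestronglyMeasurable.mul
        ((nh_meas κ A).aestronglyMeasurable.mul hG.aestronglyMeasurable.comp_snd)
    exact h1.integral_prod_right'
  have iF : IntegrableOn F (Set.Ioc 0 1) := by
    refine Integrable.mono' ((rpow_int_Ioc hA 1 (2 * κ)).mul_const (∫ t, ‖G t‖)) mF ?_
    refine (ae_restrict_mem measurableSet_Ioc).mono fun u hu => ?_
    refine (FT_norm_le z).trans ?_
    rw [← integral_const_mul]
    refine integral_mono_of_nonneg (Eventually.of_forall fun t => norm_nonneg _) (hG.norm.const_mul _)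
      (Eventually.of_forall fun t => ?_)
    simp only
    rw [norm_mul]
    exact mul_le_mul_of_nonneg_right (nh_bd hk0 hu.1 t) (norm_nonneg _)
  have e1 : (∫ u in Set.Ioc (0:ℝ) 1, F u).re = ∫ u in Set.Ioc (0:ℝ) 1, (F u).re := (integral_re iF).symm
  rw [e1]
  have iR : IntegrableOn (fun u => (F u).re) (Set.Ioc 0 1) := iF.re
  set ρ := r / (1 + |z|) with hρ
  have hz : 0 < 1 + |z| := by positivity
  have hρ0 : 0 < ρ := by positivity
  have hρ1 : ρ ≤ 1 := by
    rw [hρ, div_le_one hz]; linarith [abs_nonneg z]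
  have hsub : Set.Ioc 0 ρ ⊆ Set.Ioc (0:ℝ) 1 := Set.Ioc_subset_Ioc_right hρ1
  have reF : ∀ u, (F u).re = κ * u ^ A * (DD G u z).re := fun u => by rw [eF, Complex.re_ofReal_mul]
  calc κ * Real.exp (-1) * (ρ ^ (A + 1) / (A + 1)) * (DD G r 0).re
      = ∫ u in Set.Ioc 0 ρ, κ * u ^ A * (Real.exp (-1) * (DD G r 0).re) := by
        rw [integral_mul_const, integral_const_mul, ← intervalIntegral.integral_of_le hρ0.le,
          integral_rpow (Or.inl (by linarith)), Real.zero_rpow (by linarith)]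
        ring
    _ ≤ ∫ u in Set.Ioc 0 ρ, (F u).re := by
        refine setIntegral_mono_on ?_ (iR.mono_set hsub) measurableSet_Ioc fun u hu => ?_
        · have := (rpow_int_Ioc (a := A + 1) (by linarith) ρ κ).mul_const (Real.exp (-1) * (DD G r 0).re)
          simpa [IntegrableOn] using this
        · have hu0 : 0 < u := hu.1
          rw [reF]
          refine mul_le_mul_of_nonneg_left (DD_ge hG hp hu0 hr z ?_) (by positivity)
          have := hu.2
          rwa [hρ, le_div_iff₀ hz] at this
    _ ≤ _ := by
        refine setIntegral_mono_set iR ?_ hsub.eventuallyLE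
        refine (ae_restrict_mem measurableSet_Ioc).mono fun u hu => ?_
        have hu0 : 0 < u := hu.1
        simp only [reF, Pi.zero_apply]
        exact mul_nonneg (by positivity) (DD_nonneg hG hp hu0 z)

lemma lower_bd {a b κ A r : ℝ} (h0 : 0 < a) (h2 : a < 2) (hA : a ≤ A) (hk0 : 0 ≤ κ)
    (hb : |b| < 1) (hk : κ ≤ (1 - |b|) / (2 * KK a)) (hr0 : 0 < r) (hr : r ≤ 1) (z : ℝ) :
    Real.exp (-nh κ A 0) * (κ * Real.exp (-1) * ((r / (1 + |z|)) ^ (A + 1) / (A + 1)) * (DD (phi1 a b κ A) r 0).re) ≤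
      (FT (fun t => Complex.exp (Psi a b t)) z).re := by
  have hi := phi1_integrable h0 h2 hA hk0 hb hk
  have hp := phi1_FT h0 h2 hA hk0 hb hk
  have hA0 := h0.trans_le hA
  have hm := nh_mult hA0 hk0
  have h1 := FT_nh hA0 hk0 hi hp hr0 hr z
  have h3 := (Complex.le_def.1 (hm.exp_sub.2.2 _ hi hp z)).1
  have e : FT (fun t => Complex.exp (Psi a b t)) z = ((Real.exp (-nh κ A 0) : ℝ) : ℂ) *
      (FT (fun t => (Complex.exp (nh κ A t) - nh κ A t) * phi1 a b κ A t) z + FT (fun t => (nh κ A t : ℂ) * phi1 a b κ A t) z) := by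
    unfold FT
    rw [← integral_add (ker_integrable (hm.exp_sub.integrable hi) z) (ker_integrable (hm.integrable hi) z), ← integral_const_mul]
    congr 1; ext t
    have : Complex.exp (Psi a b t) = ((Real.exp (-nh κ A 0) : ℝ) : ℂ) * (Complex.exp (nh κ A t) * phi1 a b κ A t) := by
      rw [phi1, Complex.ofReal_exp, ← Complex.exp_add, ← Complex.exp_add]; congr 1; push_cast; ring
    simp only [this]; ring
  rw [e, Complex.re_ofReal_mul]
  refine mul_le_mul_of_nonneg_left ?_ (Real.exp_pos _).le
  rw [Complex.add_re]
  rw [Complex.zero_re] at h3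
  linarith

end

section
open scoped ComplexOrder

lemma continuousAt_Tr {a : ℝ} (h0 : 0 < a) (h2 : a < 2) : ContinuousAt Tr a := (hasDerivAt_Tr h0 h2).continuousAt

lemma Psi_cont_param {a b : ℝ} (h0 : 0 < a) (h2 : a < 2) (t : ℝ) :
    ContinuousAt (fun p : ℝ × ℝ => Psi p.1 p.2 t) (a, b) := by
  have c1 : ContinuousAt (fun p : ℝ × ℝ => |t| ^ p.1) (a, b) := by
    have : ContinuousAt (fun x : ℝ => |t| ^ x) a := by
      rcases eq_or_ne |t| 0 with h | h
      · rw [h]; exact Real.continuousAt_const_rpow' h0.ne'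
      · exact Real.continuousAt_const_rpow h
    exact ContinuousAt.comp (f := fun p : ℝ × ℝ => p.1) (x := (a, b)) this continuousAt_fst
  have c2 : ContinuousAt (fun p : ℝ × ℝ => Tr p.1) (a, b) :=
    ContinuousAt.comp (f := fun p : ℝ × ℝ => p.1) (x := (a, b)) (continuousAt_Tr h0 h2) continuousAt_fst
  have c3 : ContinuousAt (fun p : ℝ × ℝ => ell p.1 t) (a, b) :=
    ContinuousAt.comp (f := fun p : ℝ × ℝ => p.1) (x := (a, b)) (continuous_ell_param t).continuousAt continuousAt_fst
  unfold Psi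
  refine ContinuousAt.add ?_ (ContinuousAt.mul continuousAt_const ?_)
  · exact Complex.continuous_ofReal.continuousAt.comp c1.neg
  · exact Complex.continuous_ofReal.continuousAt.comp ((continuousAt_snd.mul c2).mul (continuousAt_const.mul c3))

lemma sell_bound {a e α s : ℝ} (he : 0 < e) (h1 : a + 2 * e ≤ 1) (h2 : a + 2 * e ≤ α) (ha : 0 < a)
    (hα : α ≤ 2) : |s * ell α s| ≤ 2 * (1 + 1 / e) ^ 2 * (|s| ^ a * (1 + |s|) ^ 4) := by
  rcases lt_trichotomy s 0 with hs | rfl | hs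
  · have h : 0 < -s := by linarith
    have := (ell_bound (a := α) h).trans (log_pow_bound he h1 h2 ha.le hα h)
    rw [ell_neg] at this
    rw [abs_of_neg hs]
    simpa [abs_mul] using this
  · simp [Real.zero_rpow ha.ne']
  · have := (ell_bound (a := α) hs).trans (log_pow_bound he h1 h2 ha.le hα hs)
    rwa [abs_of_pos hs]

lemma Psi_cont_zero {a b : ℝ} (h0 : 0 < a) (h2 : a < 2) : ContinuousAt (Psi a b) 0 := by
  set m := min 1 a with hm
  have hm0 : 0 < m := lt_min one_pos h0
  have hm1 : m ≤ 1 := min_le_left _ _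
  have hm2 : m ≤ a := min_le_right _ _
  have c1 : ContinuousAt (fun s : ℝ => s * ell a s) 0 := by
    rw [ContinuousAt, zero_mul]
    have hb : ∀ s, |s * ell a s| ≤ 2 * (1 + 1 / (m / 4)) ^ 2 * (|s| ^ (m / 2) * (1 + |s|) ^ 4) := fun s =>
      sell_bound (by positivity) (by linarith) (by linarith) (by positivity) h2.le
    refine squeeze_zero_norm hb ?_
    have : Continuous (fun s : ℝ => 2 * (1 + 1 / (m / 4)) ^ 2 * (|s| ^ (m / 2) * (1 + |s|) ^ 4)) := by
      refine continuous_const.mul (Continuous.mul ?_ (by fun_prop))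
      exact continuous_abs.rpow_const fun s => Or.inr (by positivity)
    have h := this.tendsto 0
    rw [abs_zero, Real.zero_rpow (by positivity)] at h
    simpa using h
  have c2 : ContinuousAt (fun s : ℝ => |s| ^ a) 0 :=
    (continuous_abs.rpow_const fun s => Or.inr h0.le).continuousAt
  unfold Psi
  refine ContinuousAt.add ?_ (ContinuousAt.mul continuousAt_const ?_)
  · exact Complex.continuous_ofReal.continuousAt.comp c2.neg
  · exact Complex.continuous_ofReal.continuousAt.comp (continuousAt_const.mul c1)

lemma nh_cont {κ A : ℝ} (hA : 0 < A) (hk0 : 0 ≤ κ) : Continuous (nh κ A) := by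
  unfold nh
  refine continuous_of_dominated (bound := fun u => 2 * κ * u ^ (A - 1))
    (fun t => (nh_integrable hA hk0 t).aestronglyMeasurable) (fun t => ?_) (rpow_int_Ioc hA 1 (2 * κ)) ?_
  · refine (ae_restrict_mem measurableSet_Ioc).mono fun u hu => ?_
    have := nh_bd (A := A) hk0 hu.1 t
    rwa [Complex.norm_real] at this
  · refine (ae_restrict_mem measurableSet_Ioc).mono fun u hu => ?_
    have hu0 : 0 < u := hu.1
    refine continuous_const.mul (continuous_const.div (by fun_prop) fun t => by positivity)

lemma DD_pos {a b κ A : ℝ} (h0 : 0 < a) (h2 : a < 2) (hA : a ≤ A) (hk0 : 0 ≤ κ)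
    (hb : |b| < 1) (hk : κ ≤ (1 - |b|) / (2 * KK a)) : ∃ r, 0 < r ∧ r ≤ 1 ∧ 0 < (DD (phi1 a b κ A) r 0).re := by
  have hc : ContinuousAt (phi1 a b κ A) 0 := by
    unfold phi1
    refine Complex.continuous_exp.continuousAt.comp ((ContinuousAt.sub (Psi_cont_zero h0 h2) ?_).add continuousAt_const)
    exact (Complex.continuous_ofReal.comp (nh_cont (h0.trans_le hA) hk0)).continuousAt
  have hm := (phi1_mult h0 h2 hA hk0 hb hk).1
  have e : ∀ r : ℝ, 0 < r → DD (phi1 a b κ A) r 0 = ∫ v : ℝ, ((2 * (1 + v ^ 2)⁻¹ : ℝ) : ℂ) * phi1 a b κ A (r * v) := by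
    intro r hr
    have := Measure.integral_comp_mul_left (fun t : ℝ => ((2 * (1 + (t / r) ^ 2)⁻¹ : ℝ) : ℂ) * phi1 a b κ A t) r
    have e2 : ∀ v : ℝ, r * v / r = v := fun v => by field_simp
    simp only [e2] at this
    rw [this, DD, FT, ← integral_smul]
    congr 1; ext t
    simp only [kerf, zero_mul, Complex.ofReal_zero, mul_zero, neg_zero, Complex.exp_zero, one_mul, Complex.real_smul]
    rw [← mul_assoc, ← Complex.ofReal_mul]
    congr 2
    rw [abs_of_pos (by positivity)]
    have : r ^ 2 + t ^ 2 ≠ 0 := by positivity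
    field_simp
  have hl : Tendsto (fun n : ℕ => (DD (phi1 a b κ A) (1 / ((n:ℝ) + 1)) 0).re) atTop (nhds (2 * Real.pi)) := by
    have h1 : Tendsto (fun n : ℕ => DD (phi1 a b κ A) (1 / ((n:ℝ) + 1)) 0) atTop
       (nhds (∫ v : ℝ, ((2 * (1 + v ^ 2)⁻¹ : ℝ) : ℂ) * 1)) := by
      have : ∀ n : ℕ, (0:ℝ) < 1 / ((n:ℝ) + 1) := fun n => by positivity
      simp_rw [fun n => e _ (this n)]
      apply tendsto_integral_of_dominated_convergence (fun v => 2 * (1 + v ^ 2)⁻¹ * Real.exp (nh κ A 0))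
      · intro n
        apply Measurable.aestronglyMeasurable
        fun_prop
      · exact (integrable_inv_one_add_sq.const_mul 2).mul_const _
      · intro n
        refine Eventually.of_forall fun v => ?_
        rw [norm_mul, Complex.norm_real, Real.norm_of_nonneg (by positivity)]
        gcongr
        refine (norm_phi1 hk0 _).trans (mul_le_of_le_one_right (Real.exp_pos _).le ?_)
        rw [Real.exp_le_one_iff]
        have : 0 ≤ |1 / ((n:ℝ) + 1) * v| ^ a := by positivity
        linarith
      · refine Eventually.of_forall fun v => ?_
        refine Tendsto.const_mul _ ?_
        have h3 : phi1 a b κ A 0 = 1 := by simp [phi1, Psi_zero h0.ne']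
        rw [← h3]
        refine hc.tendsto.comp ?_
        simpa using tendsto_one_div_add_atTop_nhds_zero_nat.mul_const v
    have h2 : ∫ v : ℝ, ((2 * (1 + v ^ 2)⁻¹ : ℝ) : ℂ) * 1 = ((2 * Real.pi : ℝ) : ℂ) := by
      simp_rw [mul_one]
      rw [integral_complex_ofReal, integral_const_mul, integral_univ_inv_one_add_sq]
    rw [h2] at h1
    exact (Complex.continuous_re.tendsto _).comp h1
  obtain ⟨n, hn⟩ := (hl.eventually_const_lt (show 0 < 2 * Real.pi by positivity)).exists
  refine ⟨_, ?_, ?_, hn⟩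
  · positivity
  · rw [div_le_one (by positivity)]; linarith [Nat.cast_nonneg (α := ℝ) n]

lemma KK_cont {a : ℝ} (h0 : 0 < a) (h2 : a < 2) : ContinuousAt KK a := by
  have := sin_pos_aux h0 h2
  unfold KK
  exact continuousAt_const.div (Continuous.continuousAt (by fun_prop)) (by positivity)

lemma lower_unif {a0 b0 A : ℝ} (h0 : 0 < a0) (h2 : a0 < 2) (hA : a0 < A) (hb0 : |b0| < 1) :
    ∃ c > 0, ∀ᶠ p : ℝ × ℝ in nhds (a0, b0), ∀ z : ℝ,
      c * (1 + |z|) ^ (-(1 + A)) ≤ (FT (fun t => Complex.exp (Psi p.1 p.2 t)) z).re := by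
  have hK := KK_pos h0 h2
  have hb0' : 0 < 1 - |b0| := by linarith
  set κ := (1 - |b0|) / (4 * KK a0) with hκ
  have hκ0 : 0 < κ := by positivity
  have hcK : ContinuousAt (fun p : ℝ × ℝ => (1 - |p.2|) / (2 * KK p.1)) (a0, b0) := by
    refine ContinuousAt.div (continuousAt_const.sub continuousAt_snd.abs) (continuousAt_const.mul ?_) (by positivity)
    exact ContinuousAt.comp (f := fun p : ℝ × ℝ => p.1) (x := (a0, b0)) (KK_cont h0 h2) continuousAt_fst
  have hκlt : κ < (1 - |b0|) / (2 * KK a0) := by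
    rw [hκ, div_lt_div_iff₀ (by positivity) (by positivity)]; nlinarith
  have ev1 : ∀ᶠ p : ℝ × ℝ in nhds (a0, b0), κ < (1 - |p.2|) / (2 * KK p.1) := hcK.eventually_const_lt hκlt
  have hfst : ContinuousAt (fun p : ℝ × ℝ => p.1) (a0, b0) := continuousAt_fst
  have hsnd : ContinuousAt (fun p : ℝ × ℝ => |p.2|) (a0, b0) := continuousAt_snd.abs
  have ev2 : ∀ᶠ p : ℝ × ℝ in nhds (a0, b0), a0 / 2 < p.1 := hfst.eventually_const_lt (by simp only; linarith)
  have ev3 : ∀ᶠ p : ℝ × ℝ in nhds (a0, b0), p.1 < 2 := hfst.eventually_lt_const h2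
  have ev4 : ∀ᶠ p : ℝ × ℝ in nhds (a0, b0), p.1 < A := hfst.eventually_lt_const hA
  have ev5 : ∀ᶠ p : ℝ × ℝ in nhds (a0, b0), |p.2| < 1 := hsnd.eventually_lt_const hb0
  obtain ⟨r, hr0, hr1, hM⟩ := DD_pos h0 h2 hA.le hκ0.le hb0 hκlt.le
  set M := (DD (phi1 a0 b0 κ A) r 0).re with hMdef
  obtain ⟨D, hD, hDb⟩ := exp_rpow_bound (half_pos h0) 2
  have hc : ContinuousAt (fun p : ℝ × ℝ => DD (phi1 p.1 p.2 κ A) r 0) (a0, b0) := by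
    unfold DD FT
    refine continuousAt_of_dominated (bound := fun t => 2 / r * (Real.exp (nh κ A 0) * (D * (1 / (1 + |t|) ^ 2)))) ?_ ?_ ?_ ?_
    · filter_upwards [ev1, ev2, ev3, ev4, ev5] with p p1 p2 p3 p4 p5
      have hi := phi1_integrable (by linarith) p3 p4.le hκ0.le p5 p1.le
      exact (ker_integrable ((lap_mult hr0).integrable hi) 0).aestronglyMeasurable
    · filter_upwards [ev1, ev2, ev3, ev4, ev5] with p p1 p2 p3 p4 p5
      refine Eventually.of_forall fun t => ?_
      rw [norm_mul, norm_ker, one_mul, norm_mul, Complex.norm_real, Real.norm_of_nonneg (by positivity)]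
      refine mul_le_mul ?_ ?_ (norm_nonneg _) (by positivity)
      · rw [div_le_div_iff₀ (by positivity) hr0]; nlinarith [sq_nonneg t]
      · refine (norm_phi1 hκ0.le t).trans ?_
        gcongr
        have := hDb p.1 p2.le |t| (abs_nonneg t)
        rwa [mul_one_div]
    · exact ((int_inv_sq.const_mul D).const_mul _).const_mul _
    · refine Eventually.of_forall fun t => ?_
      refine continuousAt_const.mul (continuousAt_const.mul ?_)
      unfold phi1
      exact Complex.continuous_exp.continuousAt.comp (((Psi_cont_param h0 h2 t).sub continuousAt_const).add continuousAt_const)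
  have hcr : ContinuousAt (fun p : ℝ × ℝ => (DD (phi1 p.1 p.2 κ A) r 0).re) (a0, b0) :=
    Complex.continuous_re.continuousAt.comp hc
  have ev6 : ∀ᶠ p : ℝ × ℝ in nhds (a0, b0), M / 2 < (DD (phi1 p.1 p.2 κ A) r 0).re :=
    hcr.eventually_const_lt (half_lt_self hM)
  have hA0 : 0 < A + 1 := by linarith
  refine ⟨Real.exp (-nh κ A 0) * (κ * Real.exp (-1) * (r ^ (A + 1) / (A + 1)) * (M / 2)), by positivity, ?_⟩
  filter_upwards [ev1, ev2, ev3, ev4, ev5, ev6] with p p1 p2 p3 p4 p5 p6 z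
  refine le_trans ?_ (lower_bd (by linarith) p3 p4.le hκ0.le p5 p1.le hr0 hr1 z)
  have hz : 0 < 1 + |z| := by positivity
  have : (r / (1 + |z|)) ^ (A + 1) = r ^ (A + 1) * (1 + |z|) ^ (-(1 + A)) := by
    rw [Real.div_rpow hr0.le hz.le, Real.rpow_neg hz.le, add_comm 1 A, div_eq_mul_inv]
  rw [this]
  calc _ = Real.exp (-nh κ A 0) * (κ * Real.exp (-1) * (r ^ (A + 1) * (1 + |z|) ^ (-(1 + A)) / (A + 1)) * (M / 2)) := by ring
    _ ≤ _ := by gcongr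

end



lemma kerf_deriv (x s : ℝ) : HasDerivAt (kerf x) (-(Complex.I * (x:ℂ)) * kerf x s) s := by
  unfold kerf
  have h1 : HasDerivAt (fun s : ℝ => -(Complex.I * ((x * s : ℝ) : ℂ))) (-(Complex.I * (x:ℂ))) s := by
    have := ((((hasDerivAt_id s).ofReal_comp).const_mul (x:ℂ)).const_mul Complex.I).neg
    exact (this.congr_deriv (by simp)).congr_of_eventuallyEq (Eventually.of_forall fun y => by simp)
  have := h1.cexp
  convert this using 1
  ring

lemma ibp_bound {c x : ℝ} (hx : x ≠ 0) {Q Q1 : ℝ → ℂ} {q0 : ℂ} (hd : ∀ s ∈ Set.Ioi c, HasDerivAt Q (Q1 s) s)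
    (hQ : IntegrableOn Q (Set.Ioi c)) (hQ1 : IntegrableOn Q1 (Set.Ioi c))
    (h0 : Tendsto Q (nhdsWithin c (Set.Ioi c)) (nhds q0)) (hi : Tendsto Q atTop (nhds 0)) :
    |x| * ‖∫ s in Set.Ioi c, kerf x s * Q s‖ ≤ ‖q0‖ + ‖∫ s in Set.Ioi c, kerf x s * Q1 s‖ := by
  have hI : -(Complex.I * (x:ℂ)) ≠ 0 := by simp [hx]
  have b1 : IntegrableOn (fun s => Q s * kerf x s) (Set.Ioi c) :=
    hQ.mul_bdd (c := 1) (continuous_ker x).aestronglyMeasurable (Eventually.of_forall fun t => (norm_ker x t).le)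
  have b2 : IntegrableOn (fun s => Q1 s * kerf x s) (Set.Ioi c) :=
    hQ1.mul_bdd (c := 1) (continuous_ker x).aestronglyMeasurable (Eventually.of_forall fun t => (norm_ker x t).le)
  have key := integral_Ioi_mul_deriv_eq_deriv_mul (a := c) (u := Q) (u' := Q1) (v := kerf x)
    (v' := fun s => -(Complex.I * (x:ℂ)) * kerf x s) (a' := q0 * kerf x c) (b' := 0) hd (fun s _ => kerf_deriv x s)
    (by
      have := b1.const_mul (-(Complex.I * (x:ℂ)))
      refine this.congr (Eventually.of_forall fun s => ?_)
      simp; ring) b2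
    (h0.mul ((continuous_ker x).tendsto c |>.mono_left nhdsWithin_le_nhds))
    (by
      refine squeeze_zero_norm (a := fun s => ‖Q s‖) (fun s => ?_) (by simpa using hi.norm)
      simp [norm_ker])
  have e : ∫ s in Set.Ioi c, Q s * (-(Complex.I * (x:ℂ)) * kerf x s) = -(Complex.I * (x:ℂ)) * ∫ s in Set.Ioi c, kerf x s * Q s := by
    rw [← integral_const_mul]; congr 1; ext s; ring
  rw [e] at key
  have e2 : ∫ s in Set.Ioi c, Q1 s * kerf x s = ∫ s in Set.Ioi c, kerf x s * Q1 s := by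
    congr 1; ext s; ring
  rw [e2] at key
  have := congrArg norm key
  rw [norm_mul, norm_neg, norm_mul, Complex.norm_I, one_mul, Complex.norm_real, Real.norm_eq_abs] at this
  rw [this, zero_sub]
  refine (norm_sub_le _ _).trans ?_
  rw [norm_neg, norm_mul, norm_ker, mul_one]

lemma ker_norm_int {S : Set ℝ} {x : ℝ} {Q : ℝ → ℂ} : ‖∫ s in S, kerf x s * Q s‖ ≤ ∫ s in S, ‖Q s‖ := by
  refine (norm_integral_le_integral_norm _).trans (le_of_eq ?_)
  congr 1; ext t; rw [norm_mul, norm_ker, one_mul]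

noncomputable def Kdec (a : ℝ) : ℝ := 4 * (KK (a + 1) + (1 / a + 1 + 1 / (1 - a)))

lemma decay {a C : ℝ} (ha : 0 < a) (ha1 : a < 1) (hC : 0 ≤ C) {Q Q1 Q2 : ℝ → ℂ}
    (hd : ∀ s, 0 < s → HasDerivAt Q (Q1 s) s) (hd1 : ∀ s, 0 < s → HasDerivAt Q1 (Q2 s) s)
    (hm2 : AEStronglyMeasurable Q2 (volume.restrict (Set.Ioi 0)))
    (b0 : ∀ s, 0 < s → ‖Q s‖ ≤ C * (s ^ a / (1 + s ^ 2)))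
    (b1 : ∀ s, 0 < s → ‖Q1 s‖ ≤ C * (s ^ (a - 1) / (1 + s ^ 2)))
    (b2 : ∀ s, 0 < s → ‖Q2 s‖ ≤ C * (s ^ (a - 2) / (1 + s ^ 2))) (x : ℝ) :
    ‖∫ s in Set.Ioi (0:ℝ), kerf x s * Q s‖ ≤ Kdec a * C * (1 + |x|) ^ (-(1 + a)) := by
  obtain ⟨i0, e0⟩ := K1_int (a := a + 1) (by linarith) (by linarith)
  obtain ⟨i1, e1⟩ := K1_int ha (by linarith)
  rw [add_sub_cancel_right] at i0 e0
  have hKp : 0 < KK (a + 1) := KK_pos (by linarith) (by linarith)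
  have h1a : 0 < 1 - a := by linarith
  have mQ : AEStronglyMeasurable Q (volume.restrict (Set.Ioi 0)) :=
    ContinuousOn.aestronglyMeasurable (fun s hs => (hd s hs).continuousAt.continuousWithinAt) measurableSet_Ioi
  have mQ1 : AEStronglyMeasurable Q1 (volume.restrict (Set.Ioi 0)) :=
    ContinuousOn.aestronglyMeasurable (fun s hs => (hd1 s hs).continuousAt.continuousWithinAt) measurableSet_Ioi
  have iQ : IntegrableOn Q (Set.Ioi 0) :=
    Integrable.mono' (i0.const_mul C) mQ ((ae_restrict_mem measurableSet_Ioi).mono fun s hs => b0 s hs)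
  have iQ1 : IntegrableOn Q1 (Set.Ioi 0) :=
    Integrable.mono' (i1.const_mul C) mQ1 ((ae_restrict_mem measurableSet_Ioi).mono fun s hs => b1 s hs)
  have two : (2:ℝ) ^ (1 + a) ≤ 4 := by
    calc (2:ℝ) ^ (1 + a) ≤ 2 ^ (2:ℝ) := Real.rpow_le_rpow_of_exponent_le one_le_two (by linarith)
      _ = 4 := by norm_num
  have hxp : 0 < 1 + |x| := by positivity
  rcases le_total |x| 1 with hx | hx
  · have h1 : ‖∫ s in Set.Ioi (0:ℝ), kerf x s * Q s‖ ≤ C * KK (a + 1) := by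
      refine ker_norm_int.trans ?_
      rw [← e0, ← integral_const_mul]
      exact setIntegral_mono_on iQ.norm (i0.const_mul C) measurableSet_Ioi fun s hs => b0 s hs
    have h2 : 1 ≤ 4 * (1 + |x|) ^ (-(1 + a)) := by
      have : (1 + |x|) ^ (1 + a) ≤ 4 := le_trans (Real.rpow_le_rpow (by positivity) (by linarith) (by linarith)) two
      rw [Real.rpow_neg hxp.le, ← div_eq_mul_inv, le_div_iff₀ (by positivity)]; linarith
    calc _ ≤ C * KK (a + 1) * 1 := by linarith
      _ ≤ C * KK (a + 1) * (4 * (1 + |x|) ^ (-(1 + a))) := by gcongr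
      _ ≤ _ := by
        unfold Kdec
        have : 0 ≤ C * (1 / a + 1 + 1 / (1 - a)) * (4 * (1 + |x|) ^ (-(1 + a))) := by positivity
        linarith
  · have hx0 : 0 < |x| := by linarith
    have hxne : x ≠ 0 := abs_pos.1 hx0
    set δ := |x|⁻¹ with hδ
    have hδ0 : 0 < δ := by positivity
    have hsub : Set.Ioi δ ⊆ Set.Ioi (0:ℝ) := Set.Ioi_subset_Ioi hδ0.le
    have pw : ∀ s : ℝ, 0 < s → ∀ r : ℝ, s ^ r / (1 + s ^ 2) ≤ s ^ r := fun s hs r =>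
      div_le_self (by positivity) (by nlinarith [sq_nonneg s])
    have iQ2 : IntegrableOn Q2 (Set.Ioi δ) := by
      have := (integrableOn_Ioi_rpow_of_lt (a := a - 2) (by linarith) hδ0).const_mul C
      refine Integrable.mono' this (hm2.mono_measure (Measure.restrict_mono hsub le_rfl)) ((ae_restrict_mem measurableSet_Ioi).mono fun s hs => ?_)
      exact (b2 s (hsub hs)).trans (mul_le_mul_of_nonneg_left (pw s (hsub hs) _) hC)
    have t0 : Tendsto Q (nhdsWithin 0 (Set.Ioi 0)) (nhds 0) := by
      refine squeeze_zero_norm' (a := fun s => C * s ^ a) (eventually_nhdsWithin_of_forall fun s hs =>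
        (b0 s hs).trans (mul_le_mul_of_nonneg_left (pw s hs _) hC)) ?_
      have := ((Real.continuous_rpow_const ha.le).tendsto 0).const_mul C
      rw [Real.zero_rpow ha.ne', mul_zero] at this
      exact this.mono_left nhdsWithin_le_nhds
    have ti : ∀ r : ℝ, r < 2 → Tendsto (fun s : ℝ => C * (s ^ r / (1 + s ^ 2))) atTop (nhds 0) := by
      intro r hr
      have h := (tendsto_rpow_neg_atTop (y := 2 - r) (by linarith)).const_mul C
      rw [mul_zero] at h
      refine squeeze_zero' ((eventually_gt_atTop 0).mono fun s hs => by positivity)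
        ((eventually_gt_atTop 0).mono fun s hs => ?_) h
      refine mul_le_mul_of_nonneg_left ?_ hC
      have : s ^ (-(2 - r)) = s ^ r / s ^ 2 := by
        rw [show -(2 - r) = r - 2 by ring, Real.rpow_sub hs]; norm_cast
      rw [this]
      gcongr; linarith
    have tQ : Tendsto Q atTop (nhds 0) :=
      squeeze_zero_norm' ((eventually_gt_atTop 0).mono fun s hs => b0 s hs) (ti a (by linarith))
    have tQ1 : Tendsto Q1 atTop (nhds 0) :=
      squeeze_zero_norm' ((eventually_gt_atTop 0).mono fun s hs => b1 s hs) (ti (a - 1) (by linarith))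
    have s1 := ibp_bound hxne (fun s hs => hd s hs) iQ iQ1 t0 tQ
    rw [norm_zero, zero_add] at s1
    have s2 := ibp_bound (c := δ) hxne (fun s hs => hd1 s (hsub hs)) (iQ1.mono_set hsub) iQ2
      ((hd1 δ hδ0).continuousAt.tendsto.mono_left nhdsWithin_le_nhds) tQ1
    have s3 : ‖Q1 δ‖ ≤ C * δ ^ (a - 1) := (b1 δ hδ0).trans (mul_le_mul_of_nonneg_left (pw δ hδ0 _) hC)
    have s4 : ‖∫ s in Set.Ioi δ, kerf x s * Q2 s‖ ≤ C * (δ ^ (a - 1) / (1 - a)) := by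
      refine ker_norm_int.trans ?_
      have e := integral_Ioi_rpow_of_lt (a := a - 2) (by linarith) hδ0
      have e' : δ ^ (a - 1) / (1 - a) = ∫ s in Set.Ioi δ, s ^ (a - 2) := by
        rw [e, show a - 2 + 1 = a - 1 by ring, ← neg_div_neg_eq]; congr 1; ring
      rw [e', ← integral_const_mul]
      refine setIntegral_mono_on iQ2.norm ((integrableOn_Ioi_rpow_of_lt (by linarith) hδ0).const_mul C) measurableSet_Ioi fun s hs => ?_
      exact (b2 s (hsub hs)).trans (mul_le_mul_of_nonneg_left (pw s (hsub hs) _) hC)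
    have s5 : ‖∫ s in Set.Ioc 0 δ, kerf x s * Q1 s‖ ≤ C * (δ ^ a / a) := by
      refine ker_norm_int.trans ?_
      have e := integral_rpow (a := 0) (b := δ) (r := a - 1) (Or.inl (by linarith))
      rw [sub_add_cancel, Real.zero_rpow ha.ne', sub_zero, intervalIntegral.integral_of_le hδ0.le] at e
      rw [← e, ← integral_const_mul]
      refine setIntegral_mono_on (iQ1.mono_set fun s hs => hs.1).norm (rpow_int_Ioc ha δ C) measurableSet_Ioc fun s hs => ?_
      exact (b1 s hs.1).trans (mul_le_mul_of_nonneg_left (pw s hs.1 _) hC)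
    have b1' : IntegrableOn (fun s => kerf x s * Q1 s) (Set.Ioi 0) :=
      iQ1.bdd_mul (c := 1) (continuous_ker x).aestronglyMeasurable (Eventually.of_forall fun t => (norm_ker x t).le)
    have s6 : ∫ s in Set.Ioi (0:ℝ), kerf x s * Q1 s = (∫ s in Set.Ioc 0 δ, kerf x s * Q1 s) + ∫ s in Set.Ioi δ, kerf x s * Q1 s := by
      rw [← setIntegral_union (Set.Ioc_disjoint_Ioi le_rfl) measurableSet_Ioi (b1'.mono_set fun s hs => hs.1) (b1'.mono_set hsub),
        Set.Ioc_union_Ioi_eq_Ioi hδ0.le]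
    have hxd : |x| * δ = 1 := by rw [hδ]; field_simp
    have s7 : δ ^ (a - 1) = |x| * δ ^ a := by
      rw [Real.rpow_sub_one hδ0.ne', hδ]; field_simp
    have s8 : ‖∫ s in Set.Ioi δ, kerf x s * Q1 s‖ ≤ C * δ ^ a * (1 + 1 / (1 - a)) := by
      have : |x| * ‖∫ s in Set.Ioi δ, kerf x s * Q1 s‖ ≤ |x| * (C * δ ^ a * (1 + 1 / (1 - a))) := by
        refine s2.trans ((add_le_add s3 s4).trans (le_of_eq ?_))
        rw [s7]; ring
      exact le_of_mul_le_mul_left this hx0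
    have s9 : |x| * ‖∫ s in Set.Ioi (0:ℝ), kerf x s * Q s‖ ≤ C * δ ^ a * (1 / a + 1 + 1 / (1 - a)) := by
      refine s1.trans ?_
      rw [s6]
      refine (norm_add_le _ _).trans ((add_le_add s5 s8).trans (le_of_eq ?_))
      ring
    have s10 : ‖∫ s in Set.Ioi (0:ℝ), kerf x s * Q s‖ ≤ C * (1 / a + 1 + 1 / (1 - a)) * |x| ^ (-(1 + a)) := by
      have : |x| ^ (-(1 + a)) = δ * δ ^ a := by
        rw [Real.rpow_neg hx0.le, hδ, Real.inv_rpow hx0.le, Real.rpow_add hx0, Real.rpow_one, mul_inv]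
      rw [this]
      have h := mul_le_mul_of_nonneg_left s9 hδ0.le
      rw [← mul_assoc, mul_comm δ |x|, hxd, one_mul] at h
      linarith
    have s11 : |x| ^ (-(1 + a)) ≤ 4 * (1 + |x|) ^ (-(1 + a)) := by
      rw [Real.rpow_neg hx0.le, Real.rpow_neg hxp.le, ← div_eq_mul_inv, inv_eq_one_div, div_le_div_iff₀ (by positivity) (by positivity), one_mul]
      calc (1 + |x|) ^ (1 + a) ≤ (2 * |x|) ^ (1 + a) := Real.rpow_le_rpow hxp.le (by linarith) (by linarith)
        _ = 2 ^ (1 + a) * |x| ^ (1 + a) := Real.mul_rpow (by norm_num) hx0.le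
        _ ≤ _ := by gcongr
    calc _ ≤ C * (1 / a + 1 + 1 / (1 - a)) * (4 * (1 + |x|) ^ (-(1 + a))) := s10.trans (by gcongr)
      _ ≤ _ := by
        unfold Kdec
        have : 0 ≤ C * KK (a + 1) * (4 * (1 + |x|) ^ (-(1 + a))) := by positivity
        linarith


noncomputable def Bf (α : ℝ) (c : Fin 5 → ℂ) (s : ℝ) : ℂ :=
  c 0 * (s : ℂ) + c 1 * ((s ^ α : ℝ) : ℂ) + c 2 * ((s * ell α s : ℝ) : ℂ) +
    c 3 * ((s ^ α * Real.log s : ℝ) : ℂ) + c 4 * ((s * emm α s : ℝ) : ℂ)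

noncomputable def cth (α : ℝ) (c : Fin 5 → ℂ) : Fin 5 → ℂ :=
  ![c 0, α * c 1 + c 2 + c 3, c 2, α * c 3 + c 4, c 4]

lemma Bf_deriv (α : ℝ) (c : Fin 5 → ℂ) {s : ℝ} (hs : 0 < s) :
    HasDerivAt (Bf α c) (Bf α (cth α c) s / s) s := by
  have d1 : HasDerivAt (fun s : ℝ => s ^ α) (α * s ^ (α - 1)) s := Real.hasDerivAt_rpow_const (Or.inl hs.ne')
  have d2 := (hasDerivAt_id s).mul (hasDerivAt_ell (a := α) hs)
  have d3 := d1.mul (Real.hasDerivAt_log hs.ne')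
  have d4 := (hasDerivAt_id s).mul (hasDerivAt_emm (a := α) hs)
  have h := ((((((hasDerivAt_id s).ofReal_comp).const_mul (c 0)).add (d1.ofReal_comp.const_mul (c 1))).add
    (d2.ofReal_comp.const_mul (c 2))).add (d3.ofReal_comp.const_mul (c 3))).add (d4.ofReal_comp.const_mul (c 4))
  refine (h.congr_deriv ?_).congr_of_eventuallyEq (Eventually.of_forall fun y => ?_)
  · have e1 : s ^ (α - 1) = s ^ α / s := Real.rpow_sub_one hs.ne' _
    have e2 : s ^ (α - 2) = s ^ α / s ^ 2 := by rw [Real.rpow_sub hs]; norm_cast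
    rw [e1, e2]
    simp only [Bf, cth]
    have : (s:ℂ) ≠ 0 := by exact_mod_cast hs.ne'
    simp [Matrix.cons_val_zero, Matrix.cons_val_one]
    field_simp
    ring
  · simp [Bf]

lemma Bf_norm {a e α s : ℝ} (he : 0 < e) (h1 : a + 2 * e ≤ 1) (h2 : a + 2 * e ≤ α) (ha : 0 ≤ a)
    (hα : α ≤ 2) (hs : 0 < s) (c : Fin 5 → ℂ) :
    ‖Bf α c s‖ ≤ 5 * ‖c‖ * (2 * (1 + 1 / e) ^ 2 * (s ^ a * (1 + s) ^ 4)) := by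
  have hE := log_pow_bound he h1 h2 ha hα hs
  set E := (1 + |Real.log s|) ^ 2 * (s + s ^ α) with hEd
  have hl := abs_nonneg (Real.log s)
  have hsα : 0 < s ^ α := by positivity
  have hE0 : 0 ≤ E := by positivity
  have l1 : 1 ≤ (1 + |Real.log s|) ^ 2 := one_le_pow₀ (by linarith)
  have l2 : |Real.log s| ≤ (1 + |Real.log s|) ^ 2 := by nlinarith
  have b0 : |s| ≤ E := by rw [abs_of_pos hs, hEd]; nlinarith
  have b1 : |s ^ α| ≤ E := by rw [abs_of_pos hsα, hEd]; nlinarith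
  have b2 : |s * ell α s| ≤ E := ell_bound hs
  have b3 : |s ^ α * Real.log s| ≤ E := by
    rw [abs_mul, abs_of_pos hsα, hEd]
    calc _ ≤ s ^ α * (1 + |Real.log s|) ^ 2 := by gcongr
      _ ≤ _ := by nlinarith
  have b4 : |s * emm α s| ≤ E := emm_bound hs
  have key : ∀ (i : Fin 5) (v : ℝ), |v| ≤ E → ‖c i * (v:ℂ)‖ ≤ ‖c‖ * E := fun i v hv => by
    rw [norm_mul, Complex.norm_real, Real.norm_eq_abs]
    exact mul_le_mul (norm_le_pi_norm c i) hv (abs_nonneg _) (norm_nonneg _)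
  have : ‖Bf α c s‖ ≤ 5 * ‖c‖ * E := by
    unfold Bf
    have k0 := key 0 _ b0
    have k1 := key 1 _ b1
    have k2 := key 2 _ b2
    have k3 := key 3 _ b3
    have k4 := key 4 _ b4
    refine (norm_add_le _ _).trans ?_
    refine (add_le_add (norm_add_le _ _) le_rfl).trans ?_
    refine (add_le_add (add_le_add (norm_add_le _ _) le_rfl) le_rfl).trans ?_
    refine (add_le_add (add_le_add (add_le_add (norm_add_le _ _) le_rfl) le_rfl) le_rfl).trans ?_
    linarith
  refine this.trans ?_
  gcongr

lemma cth_norm {α : ℝ} (h0 : 0 ≤ α) (hα : α ≤ 2) (c : Fin 5 → ℂ) : ‖cth α c‖ ≤ 4 * ‖c‖ := by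
  rw [pi_norm_le_iff_of_nonneg (by positivity)]
  have k := norm_le_pi_norm c
  have hc := norm_nonneg c
  have hα' : ‖(α:ℂ)‖ = α := by rw [Complex.norm_real, Real.norm_of_nonneg h0]
  have m : ∀ i, ‖(α:ℂ) * c i‖ ≤ 2 * ‖c‖ := fun i => by
    rw [norm_mul, hα']; exact mul_le_mul hα (k i) (norm_nonneg _) (by norm_num)
  intro i
  fin_cases i
  · show ‖c 0‖ ≤ _
    linarith [k 0]
  · show ‖α * c 1 + c 2 + c 3‖ ≤ _
    have := norm_add₃_le (a := α * c 1) (b := c 2) (c := c 3)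
    linarith [k 2, k 3, m 1]
  · show ‖c 2‖ ≤ _
    linarith [k 2]
  · show ‖α * c 3 + c 4‖ ≤ _
    have := norm_add_le (α * c 3) (c 4)
    linarith [k 4, m 3]
  · show ‖c 4‖ ≤ _
    linarith [k 4]

lemma Bf_contOn (α : ℝ) (c : Fin 5 → ℂ) : ContinuousOn (Bf α c) (Set.Ioi 0) :=
  fun _ hs => (Bf_deriv α c hs).continuousAt.continuousWithinAt

noncomputable def Cup (e L D : ℝ) : ℝ := 7 * (1 + 160 * L * (1 + 1 / e) ^ 2) ^ 3 * D


lemma norm7 {x1 x2 x3 x4 x5 x6 x7 : ℂ} {Z : ℝ} (h1 : ‖x1‖ ≤ Z) (h2 : ‖x2‖ ≤ Z) (h3 : ‖x3‖ ≤ Z) (h4 : ‖x4‖ ≤ Z)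
    (h5 : ‖x5‖ ≤ Z) (h6 : ‖x6‖ ≤ Z) (h7 : ‖x7‖ ≤ Z) : ‖x1 + x2 + x3 - x4 - x5 + x6 + x7‖ ≤ 7 * Z := by
  have a1 := norm_add_le (x1 + x2 + x3 - x4 - x5 + x6) x7
  have a2 := norm_add_le (x1 + x2 + x3 - x4 - x5) x6
  have a3 := norm_sub_le (x1 + x2 + x3 - x4) x5
  have a4 := norm_sub_le (x1 + x2 + x3) x4
  have a5 := norm_add_le (x1 + x2) x3
  have a6 := norm_add_le x1 x2
  linarith

lemma upper_abs {a V D : ℝ} (ha : 0 < a) (ha1 : a < 1) (hV1 : 1 ≤ V) (hD0 : 0 ≤ D)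
    {B B1 B2 P P1 P2 : ℝ → ℂ}
    (dB : ∀ s, 0 < s → HasDerivAt B (B1 s / s) s) (dB1 : ∀ s, 0 < s → HasDerivAt B1 (B2 s / s) s)
    (dP : ∀ s, 0 < s → HasDerivAt P (P1 s / s) s) (dP1 : ∀ s, 0 < s → HasDerivAt P1 (P2 s / s) s)
    (cB2 : ContinuousOn B2 (Set.Ioi 0)) (cP2 : ContinuousOn P2 (Set.Ioi 0))
    (gB : ∀ s, 0 < s → ‖B s‖ ≤ V * (s ^ a * (1 + s) ^ 4))
    (gB1 : ∀ s, 0 < s → ‖B1 s‖ ≤ V * (s ^ a * (1 + s) ^ 4))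
    (gB2 : ∀ s, 0 < s → ‖B2 s‖ ≤ V * (s ^ a * (1 + s) ^ 4))
    (gP1 : ∀ s, 0 < s → ‖P1 s‖ ≤ V * (s ^ a * (1 + s) ^ 4))
    (gP2 : ∀ s, 0 < s → ‖P2 s‖ ≤ V * (s ^ a * (1 + s) ^ 4))
    (hD : ∀ s, 0 < s → ‖Complex.exp (P s)‖ ≤ D / (1 + s) ^ 16) :
    (∀ s, 0 < s → ‖B s * Complex.exp (P s)‖ ≤ (7 * V ^ 3 * D) * (s ^ a / (1 + s ^ 2))) ∧
    ∀ x : ℝ, ‖∫ s in Set.Ioi (0:ℝ), kerf x s * (B s * Complex.exp (P s))‖ ≤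
      Kdec a * (7 * V ^ 3 * D) * (1 + |x|) ^ (-(1 + a)) := by
  have one_le : ∀ s : ℝ, 0 < s → ∀ X : ℂ, ‖X‖ ≤ V * (s ^ a * (1 + s) ^ 4) → ‖X‖ ≤ V ^ 3 * (s ^ a * (1 + s) ^ 14) := by
    intro s hs X hX
    refine hX.trans ?_
    have y1 : 1 ≤ 1 + s := by linarith
    gcongr
    · exact le_self_pow₀ hV1 (by norm_num)
    · norm_num
  have sa : ∀ s : ℝ, 0 < s → s ^ a ≤ 1 + s := by
    intro s hs
    calc s ^ a ≤ (1 + s) ^ a := Real.rpow_le_rpow hs.le (by linarith) ha.le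
      _ ≤ (1 + s) ^ (1:ℝ) := Real.rpow_le_rpow_of_exponent_le (by linarith) (by linarith)
      _ = 1 + s := Real.rpow_one _
  have two_le : ∀ s : ℝ, 0 < s → ∀ X Y : ℂ, ‖X‖ ≤ V * (s ^ a * (1 + s) ^ 4) → ‖Y‖ ≤ V * (s ^ a * (1 + s) ^ 4) →
      ‖X * Y‖ ≤ V ^ 3 * (s ^ a * (1 + s) ^ 14) := by
    intro s hs X Y hX hY
    have y1 : 1 ≤ 1 + s := by linarith
    have := sa s hs
    rw [norm_mul]
    calc ‖X‖ * ‖Y‖ ≤ (V * (s ^ a * (1 + s) ^ 4)) * (V * (s ^ a * (1 + s) ^ 4)) := by gcongr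
      _ = V ^ 2 * (s ^ a * (s ^ a * (1 + s) ^ 8)) := by ring
      _ ≤ V ^ 3 * (s ^ a * ((1 + s) * (1 + s) ^ 8)) := by
          have := pow_le_pow_right₀ hV1 (show 2 ≤ 3 by norm_num)
          gcongr
      _ = V ^ 3 * (s ^ a * (1 + s) ^ 9) := by ring
      _ ≤ _ := by
          have := pow_le_pow_right₀ y1 (show 9 ≤ 14 by norm_num)
          gcongr
  have three_le : ∀ s : ℝ, 0 < s → ∀ X Y Z : ℂ, ‖X‖ ≤ V * (s ^ a * (1 + s) ^ 4) → ‖Y‖ ≤ V * (s ^ a * (1 + s) ^ 4) →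
      ‖Z‖ ≤ V * (s ^ a * (1 + s) ^ 4) →
      ‖X * Y * Z‖ ≤ V ^ 3 * (s ^ a * (1 + s) ^ 14) := by
    intro s hs X Y Z hX hY hZ
    have := sa s hs
    rw [norm_mul, norm_mul]
    calc ‖X‖ * ‖Y‖ * ‖Z‖ ≤ (V * (s ^ a * (1 + s) ^ 4)) * (V * (s ^ a * (1 + s) ^ 4)) * (V * (s ^ a * (1 + s) ^ 4)) := by gcongr
      _ = V ^ 3 * (s ^ a * (s ^ a * s ^ a * (1 + s) ^ 12)) := by ring
      _ ≤ V ^ 3 * (s ^ a * ((1 + s) * (1 + s) * (1 + s) ^ 12)) := by gcongr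
      _ = _ := by ring
  have fin : ∀ s : ℝ, 0 < s → ∀ X : ℂ, ‖X‖ ≤ 7 * (V ^ 3 * (s ^ a * (1 + s) ^ 14)) →
      ‖X * Complex.exp (P s)‖ ≤ (7 * V ^ 3 * D) * (s ^ a / (1 + s ^ 2)) := by
    intro s hs X hX
    rw [norm_mul]
    calc ‖X‖ * ‖Complex.exp (P s)‖ ≤ 7 * (V ^ 3 * (s ^ a * (1 + s) ^ 14)) * (D / (1 + s) ^ 16) := by
          gcongr
          exact hD s hs
      _ = (7 * V ^ 3 * D) * (s ^ a / (1 + s) ^ 2) := by field_simp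
      _ ≤ _ := by
          have : 0 ≤ (7 * V ^ 3 * D) := by positivity
          gcongr
          nlinarith
  have q0 : ∀ s, 0 < s → ‖B s * Complex.exp (P s)‖ ≤ (7 * V ^ 3 * D) * (s ^ a / (1 + s ^ 2)) := by
    intro s hs
    refine fin s hs _ ((one_le s hs _ (gB s hs)).trans ?_)
    have : 0 ≤ V ^ 3 * (s ^ a * (1 + s) ^ 14) := by positivity
    linarith
  refine ⟨q0, ?_⟩
  refine decay (Q1 := fun s => (B1 s + B s * P1 s) * Complex.exp (P s) / s)
    (Q2 := fun s => (B2 s + B1 s * P1 s + B s * P2 s - B1 s - B s * P1 s + B1 s * P1 s + B s * P1 s * P1 s) * Complex.exp (P s) / s ^ 2)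
    ha ha1 (by positivity) ?_ ?_ ?_ q0 ?_ ?_
  · intro s hs
    have n : (s:ℂ) ≠ 0 := by exact_mod_cast hs.ne'
    refine ((dB s hs).mul (dP s hs).cexp).congr_deriv ?_
    field_simp
  · intro s hs
    have n : (s:ℂ) ≠ 0 := by exact_mod_cast hs.ne'
    have h := ((((dB1 s hs).add ((dB s hs).mul (dP1 s hs))).mul (dP s hs).cexp).div
      ((hasDerivAt_id s).ofReal_comp) n)
    refine h.congr_deriv ?_
    simp only [Pi.add_apply, Pi.mul_apply, id]
    push_cast
    field_simp
    ring
  · refine ContinuousOn.aestronglyMeasurable ?_ measurableSet_Ioi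
    have cB : ContinuousOn B (Set.Ioi 0) := fun s hs => (dB s hs).continuousAt.continuousWithinAt
    have cB1 : ContinuousOn B1 (Set.Ioi 0) := fun s hs => (dB1 s hs).continuousAt.continuousWithinAt
    have cP : ContinuousOn P (Set.Ioi 0) := fun s hs => (dP s hs).continuousAt.continuousWithinAt
    have cP1 : ContinuousOn P1 (Set.Ioi 0) := fun s hs => (dP1 s hs).continuousAt.continuousWithinAt
    refine ContinuousOn.div ?_ (by fun_prop) (fun s hs => ?_)
    · exact (((((((cB2.add (cB1.mul cP1)).add (cB.mul cP2)).sub cB1).sub (cB.mul cP1)).add (cB1.mul cP1)).add ((cB.mul cP1).mul cP1)).mul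
        (Complex.continuous_exp.comp_continuousOn cP))
    · have : (s:ℂ) ≠ 0 := by exact_mod_cast (Set.mem_Ioi.1 hs).ne'
      exact pow_ne_zero 2 this
  · intro s hs
    have n1 := one_le s hs _ (gB1 s hs)
    have n2 := two_le s hs _ _ (gB s hs) (gP1 s hs)
    have hZ : 0 ≤ V ^ 3 * (s ^ a * (1 + s) ^ 14) := by positivity
    have := fin s hs (B1 s + B s * P1 s) ((norm_add_le _ _).trans (by linarith))
    rw [norm_div, Complex.norm_real, Real.norm_of_nonneg hs.le, div_le_iff₀ hs, Real.rpow_sub_one hs.ne']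
    refine this.trans (le_of_eq ?_)
    field_simp
  · intro s hs
    have n1 := one_le s hs _ (gB1 s hs)
    have n0 := one_le s hs _ (gB2 s hs)
    have n2 := two_le s hs _ _ (gB s hs) (gP1 s hs)
    have n3 := two_le s hs _ _ (gB1 s hs) (gP1 s hs)
    have n4 := two_le s hs _ _ (gB s hs) (gP2 s hs)
    have n5 := three_le s hs _ _ _ (gB s hs) (gP1 s hs) (gP1 s hs)
    have := fin s hs (B2 s + B1 s * P1 s + B s * P2 s - B1 s - B s * P1 s + B1 s * P1 s + B s * P1 s * P1 s)
      (norm7 n0 n3 n4 n1 n2 n3 n5)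
    rw [norm_div, norm_pow, Complex.norm_real, Real.norm_of_nonneg hs.le, div_le_iff₀ (by positivity)]
    have e2 : s ^ (a - 2) = s ^ a / s ^ 2 := by rw [Real.rpow_sub hs]; norm_cast
    rw [e2]
    refine this.trans (le_of_eq ?_)
    field_simp

lemma upper {a e α L D : ℝ} (ha : 0 < a) (he : 0 < e) (h1 : a + 2 * e ≤ 1) (h2 : a + 2 * e ≤ α)
    (hα : α ≤ 2) {c d : Fin 5 → ℂ} (hc : ‖c‖ ≤ L) (hd : ‖d‖ ≤ L)
    (hD : ∀ s, 0 < s → ‖Complex.exp (Bf α d s)‖ ≤ D / (1 + s) ^ 16) :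
    (∀ s, 0 < s → ‖Bf α c s * Complex.exp (Bf α d s)‖ ≤ Cup e L D * (s ^ a / (1 + s ^ 2))) ∧
    ∀ x : ℝ, ‖∫ s in Set.Ioi (0:ℝ), kerf x s * (Bf α c s * Complex.exp (Bf α d s))‖ ≤
      Kdec a * Cup e L D * (1 + |x|) ^ (-(1 + a)) := by
  have hL : 0 ≤ L := (norm_nonneg c).trans hc
  have hα0 : 0 ≤ α := by linarith
  have hD0 : 0 ≤ D := by
    have := (norm_nonneg _).trans (hD 1 one_pos)
    by_contra h
    have : D / (1 + 1) ^ 16 < 0 := div_neg_of_neg_of_pos (by linarith) (by norm_num)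
    linarith
  set V := 1 + 160 * L * (1 + 1 / e) ^ 2 with hV
  have hV1 : 1 ≤ V := by rw [hV]; have : 0 ≤ 160 * L * (1 + 1 / e) ^ 2 := by positivity
                         linarith
  have hgen : ∀ f : Fin 5 → ℂ, ‖f‖ ≤ 16 * L → ∀ s : ℝ, 0 < s → ‖Bf α f s‖ ≤ V * (s ^ a * (1 + s) ^ 4) := by
    intro f hf s hs
    refine (Bf_norm he h1 h2 ha.le hα hs f).trans ?_
    have : 0 ≤ s ^ a * (1 + s) ^ 4 := by positivity
    calc _ ≤ 5 * (16 * L) * (2 * (1 + 1 / e) ^ 2 * (s ^ a * (1 + s) ^ 4)) := by gcongr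
      _ = (160 * L * (1 + 1 / e) ^ 2) * (s ^ a * (1 + s) ^ 4) := by ring
      _ ≤ _ := by rw [hV]; linarith
  have nc1 : ‖cth α c‖ ≤ 4 * L := (cth_norm hα0 hα c).trans (by linarith)
  have nc2 : ‖cth α (cth α c)‖ ≤ 16 * L := (cth_norm hα0 hα _).trans (by linarith)
  have nd1 : ‖cth α d‖ ≤ 4 * L := (cth_norm hα0 hα d).trans (by linarith)
  have nd2 : ‖cth α (cth α d)‖ ≤ 16 * L := (cth_norm hα0 hα _).trans (by linarith)
  exact upper_abs ha (by linarith) hV1 hD0 (fun s hs => Bf_deriv α c hs) (fun s hs => Bf_deriv α _ hs)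
    (fun s hs => Bf_deriv α d hs) (fun s hs => Bf_deriv α _ hs) (Bf_contOn _ _) (Bf_contOn _ _)
    (hgen c (by linarith)) (hgen (cth α c) (by linarith)) (hgen _ nc2) (hgen (cth α d) (by linarith)) (hgen _ nd2) hD


noncomputable def cP (p : ℝ × ℝ) : Fin 5 → ℂ := ![0, -1, Complex.I * ((p.2 * Tr p.1 : ℝ) : ℂ), 0, 0]

noncomputable def cB (i : Fin 4) (p : ℝ × ℝ) : Fin 5 → ℂ :=
  ![![Complex.I, 0, 0, 0, 0],
    ![0, -(p.1:ℂ) + Complex.I * ((p.2 * Tr p.1 : ℝ) : ℂ), Complex.I * ((p.2 * Tr p.1 : ℝ) : ℂ), 0, 0],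
    ![0, 0, Complex.I * ((p.2 * Trd p.1 : ℝ) : ℂ), -1, Complex.I * ((p.2 * Tr p.1 : ℝ) : ℂ)],
    ![0, 0, Complex.I * ((Tr p.1 : ℝ) : ℂ), 0, 0]] i

lemma cth_cP (p : ℝ × ℝ) : cth p.1 (cP p) = cB 1 p := by
  ext i
  fin_cases i <;> simp [cth, cP, cB]

lemma Psi_Bf (p : ℝ × ℝ) {s : ℝ} (hs : 0 < s) : Psi p.1 p.2 s = Bf p.1 (cP p) s := by
  simp [Psi, Bf, cP, abs_of_pos hs]
  ring

lemma Psi_cont {a b : ℝ} (h0 : 0 < a) (h2 : a < 2) : Continuous (Psi a b) := by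
  rw [continuous_iff_continuousAt]
  have pos : ∀ s : ℝ, 0 < s → ContinuousAt (Psi a b) s := fun s hs => by
    refine (Bf_deriv a (cP (a, b)) hs).continuousAt.congr ?_
    filter_upwards [lt_mem_nhds hs] with t ht
    exact (Psi_Bf (a, b) ht).symm
  intro s
  rcases lt_trichotomy s 0 with hs | rfl | hs
  · have e : Psi a b = fun t => starRingEnd ℂ (Psi a b (-t)) := by
      ext t; rw [Psi_neg]; simp
    rw [e]
    refine Complex.continuous_conj.continuousAt.comp ?_
    exact ContinuousAt.comp (g := Psi a b) (f := fun t : ℝ => -t) (pos (-s) (by linarith)) continuous_neg.continuousAt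
  · exact Psi_cont_zero h0 h2
  · exact pos s hs

lemma exp_Psi_norm (a b s : ℝ) : ‖Complex.exp (Psi a b s)‖ = Real.exp (-(|s| ^ a)) := by
  rw [Complex.norm_exp, Psi_re]

lemma exp_Psi_int {a b : ℝ} (h0 : 0 < a) (h2 : a < 2) : Integrable (fun t => Complex.exp (Psi a b t)) := by
  refine (exp_rpow_int h0).mono' (Complex.continuous_exp.comp (Psi_cont h0 h2)).aestronglyMeasurable
    (Eventually.of_forall fun t => (exp_Psi_norm a b t).le)

lemma kerf_conj (x t : ℝ) : kerf x (-t) = starRingEnd ℂ (kerf x t) := by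
  unfold kerf
  rw [← Complex.exp_conj]; simp

lemma half_re {E : ℝ → ℂ} (hE : Integrable E) (hn : ∀ t, E (-t) = starRingEnd ℂ (E t)) (x : ℝ) :
    (∫ t, kerf x t * E t).re = 2 * (∫ t in Set.Ioi (0:ℝ), kerf x t * E t).re := by
  have hi := ker_integrable hE x
  have r1 := Complex.reCLM.integral_comp_comm hi
  have r2 := Complex.reCLM.integral_comp_comm (hi.integrableOn (s := Set.Ioi (0:ℝ)))
  simp only [Complex.reCLM_apply] at r1 r2
  rw [← r1, ← r2, ← integral_comp_abs (f := fun t => (kerf x t * E t).re)]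
  congr 1; ext t
  rcases abs_choice t with h | h
  · rw [h]
  · rw [h, kerf_conj, hn, ← map_mul, Complex.conj_re]

lemma fM_eq {θ : Fin 4 → ℝ} (hθ : θ ∈ ThetaInt) (x : ℝ) :
    fM θ x = 1 / (2 * Real.pi) * (∫ t, kerf (x - θ 0) t * Complex.exp (Psi (θ 2) (θ 3) (θ 1 * t))).re := by
  unfold fM phiM
  congr 3; ext t
  rw [psiM_eq hθ.1 hθ.2.1.1, kerf, ← Complex.exp_add, ← Complex.exp_add]
  congr 1; push_cast; ring

lemma fM_half {θ : Fin 4 → ℝ} (hθ : θ ∈ ThetaInt) (x : ℝ) :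
    fM θ x = 1 / Real.pi * (∫ t in Set.Ioi (0:ℝ), kerf (x - θ 0) t * Complex.exp (Psi (θ 2) (θ 3) (θ 1 * t))).re := by
  have hi := (exp_Psi_int (b := θ 3) hθ.2.1.1 hθ.2.1.2).comp_mul_left' hθ.1.ne'
  rw [fM_eq hθ, half_re hi]
  · have := Real.pi_pos
    field_simp
  · intro t
    rw [mul_neg, Psi_neg, Complex.exp_conj]

lemma kerf_scale {σ : ℝ} (hσ : σ ≠ 0) (x t : ℝ) : kerf x t = kerf (x / σ) (σ * t) := by
  unfold kerf
  congr 4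
  field_simp

noncomputable def GG (p : ℝ × ℝ) (z : ℝ) : ℝ := (FT (fun t => Complex.exp (Psi p.1 p.2 t)) z).re

lemma fM_GG {θ : Fin 4 → ℝ} (hθ : θ ∈ ThetaInt) (x : ℝ) :
    fM θ x = 1 / (2 * Real.pi * θ 1) * GG (θ 2, θ 3) ((x - θ 0) / θ 1) := by
  have hσ := hθ.1
  rw [fM_eq hθ]
  have := Measure.integral_comp_mul_left (fun s => kerf ((x - θ 0) / θ 1) s * Complex.exp (Psi (θ 2) (θ 3) s)) (θ 1)
  simp only [← kerf_scale hσ.ne'] at this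
  rw [this, GG, FT, abs_of_pos (by positivity), Complex.smul_re, smul_eq_mul]
  field_simp

noncomputable def Qf (i : Fin 4) (p : ℝ × ℝ) (s : ℝ) : ℂ := Bf p.1 (cB i p) s * Complex.exp (Bf p.1 (cP p) s)

noncomputable def qq (i : Fin 4) (p : ℝ × ℝ) (z : ℝ) : ℝ := (∫ s in Set.Ioi (0:ℝ), kerf z s * Qf i p s).re

lemma Qf_contOn (i : Fin 4) (p : ℝ × ℝ) : ContinuousOn (Qf i p) (Set.Ioi 0) :=
  (Bf_contOn _ _).mul (Complex.continuous_exp.comp_continuousOn (Bf_contOn _ _))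

lemma cP_cont {p : ℝ × ℝ} (h0 : 0 < p.1) (h2 : p.1 < 2) : ContinuousAt cP p := by
  have h : ContinuousAt (fun p : ℝ × ℝ => Tr p.1) p := (continuousAt_Tr h0 h2).comp continuousAt_fst
  refine continuousAt_pi.2 fun i => ?_
  fin_cases i <;> simp only [cP] <;> simp <;> fun_prop

lemma cB_cont {p : ℝ × ℝ} (h0 : 0 < p.1) (h2 : p.1 < 2) (i : Fin 4) : ContinuousAt (cB i) p := by
  have h : ContinuousAt (fun p : ℝ × ℝ => Tr p.1) p := (continuousAt_Tr h0 h2).comp continuousAt_fst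
  have h' : ContinuousAt (fun p : ℝ × ℝ => Trd p.1) p := (continuousAt_Trd h0 h2).comp (f := Prod.fst) continuousAt_fst
  refine continuousAt_pi.2 fun j => ?_
  fin_cases i <;> fin_cases j <;> simp only [cB] <;> simp <;> fun_prop

lemma Bf_cont_param {p : ℝ × ℝ} {c : ℝ × ℝ → Fin 5 → ℂ} (hc : ContinuousAt c p) {s : ℝ} (hs : 0 < s) :
    ContinuousAt (fun p => Bf p.1 (c p) s) p := by
  have hc' : ∀ i, ContinuousAt (fun p => c p i) p := fun i => continuousAt_pi.1 hc i
  have e1 : Continuous (fun p : ℝ × ℝ => ell p.1 s) := (continuous_ell_param s).comp continuous_fst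
  have e2 : Continuous (fun p : ℝ × ℝ => emm p.1 s) := (continuous_emm_param s).comp continuous_fst
  have e3 : Continuous (fun p : ℝ × ℝ => s ^ p.1) := (Real.continuous_const_rpow hs.ne').comp continuous_fst
  unfold Bf
  have k0 := hc' 0
  have k1 := hc' 1
  have k2 := hc' 2
  have k3 := hc' 3
  have k4 := hc' 4
  have o := Complex.continuous_ofReal
  exact ((((k0.mul continuousAt_const).add (k1.mul (o.comp e3).continuousAt)).add
    (k2.mul (o.comp (e1.const_mul s)).continuousAt)).add
    (k3.mul (o.comp (e3.mul_const (Real.log s))).continuousAt)).add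
    (k4.mul (o.comp (e2.const_mul s)).continuousAt)

lemma Qf_cont_param {p : ℝ × ℝ} (h0 : 0 < p.1) (h2 : p.1 < 2) (i : Fin 4) {s : ℝ} (hs : 0 < s) :
    ContinuousAt (fun p => Qf i p s) p :=
  (Bf_cont_param (cB_cont h0 h2 i) hs).mul
    (Complex.continuous_exp.continuousAt.comp (Bf_cont_param (cP_cont h0 h2) hs))

lemma upper_unif {p0 : ℝ × ℝ} {a : ℝ} (ha : 0 < a) (ha1 : a < 1) (hap : a < p0.1) (h2 : p0.1 < 2) (i : Fin 4) :
    ∃ C : ℝ, 0 ≤ C ∧ ∀ᶠ p in nhds p0, (∀ s, 0 < s → ‖Qf i p s‖ ≤ C * (s ^ a / (1 + s ^ 2))) ∧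
      ∀ z, |qq i p z| ≤ C * (1 + |z|) ^ (-(1 + a)) := by
  have h0 : 0 < p0.1 := ha.trans hap
  obtain ⟨m, hm1, hm2⟩ : ∃ m, a < m ∧ m < min 1 p0.1 := exists_between (lt_min ha1 hap)
  have m1 : m < 1 := hm2.trans_le (min_le_left _ _)
  have m2 : m < p0.1 := hm2.trans_le (min_le_right _ _)
  set e := (m - a) / 2 with he
  have he0 : 0 < e := by rw [he]; linarith
  have hae : a + 2 * e = m := by rw [he]; ring
  obtain ⟨D, hD0, hD⟩ := exp_rpow_bound (ha.trans hm1) 16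
  set L := max (‖cB i p0‖ + 1) (‖cP p0‖ + 1) with hL
  have hL0 : 0 ≤ L := le_trans (by positivity) (le_max_left _ _)
  have hCu : 0 ≤ Cup e L D := by unfold Cup; positivity
  have n1 : ∀ᶠ p in nhds p0, ‖cB i p‖ < L :=
    (cB_cont h0 h2 i).norm.eventually_lt_const (lt_of_lt_of_le (by linarith) (le_max_left _ _))
  have n2 : ∀ᶠ p in nhds p0, ‖cP p‖ < L :=
    (cP_cont h0 h2).norm.eventually_lt_const (lt_of_lt_of_le (by linarith) (le_max_right _ _))
  have n3 : ∀ᶠ p : ℝ × ℝ in nhds p0, m < p.1 := continuousAt_fst.eventually_const_lt m2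
  have n4 : ∀ᶠ p : ℝ × ℝ in nhds p0, p.1 < 2 := continuousAt_fst.eventually_lt_const h2
  refine ⟨max (Cup e L D) (Kdec a * Cup e L D), le_max_of_le_left hCu, ?_⟩
  filter_upwards [n1, n2, n3, n4] with p q1 q2 q3 q4
  have := upper ha he0 (by linarith) (by linarith) q4.le q1.le q2.le (D := D) (fun s hs => by
    rw [← Psi_Bf p hs, exp_Psi_norm, abs_of_pos hs]
    exact hD _ q3.le s hs.le)
  refine ⟨fun s hs => (this.1 s hs).trans ?_, fun z => ?_⟩
  · gcongr
    exact le_max_left _ _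
  · refine (Complex.abs_re_le_norm _).trans ((this.2 z).trans ?_)
    gcongr
    exact le_max_right _ _


noncomputable def kk (i : Fin 4) (σ : ℝ) : ℝ := ![1 / σ, 1 / σ, 1, 1] i

lemma pd0 (x m t : ℝ) : HasDerivAt (fun u => kerf (x - u) t) (Complex.I * t * kerf (x - m) t) m := by
  unfold kerf
  have h1 : HasDerivAt (fun u : ℝ => -(Complex.I * (((x - u) * t : ℝ) : ℂ))) (Complex.I * t) m := by
    have := (((((hasDerivAt_id m).const_sub x).mul_const t).ofReal_comp).const_mul Complex.I).neg
    exact this.congr_deriv (by simp)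
  exact h1.cexp.congr_deriv (by ring)

lemma pd1 {p : ℝ × ℝ} {σ t : ℝ} (hσ : 0 < σ) (ht : 0 < t) :
    HasDerivAt (fun u => Psi p.1 p.2 (u * t)) (((1 / σ : ℝ) : ℂ) * Bf p.1 (cB 1 p) (σ * t)) σ := by
  have hs : 0 < σ * t := by positivity
  have h := Bf_deriv p.1 (cP p) hs
  have h2 : HasDerivAt (fun u : ℝ => u * t) t σ := by simpa using (hasDerivAt_id σ).mul_const t
  have h3 := HasDerivAt.scomp (h := fun u : ℝ => u * t) σ h h2
  refine (h3.congr_deriv ?_).congr_of_eventuallyEq ?_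
  · rw [cth_cP]
    have n1 : (t:ℂ) ≠ 0 := by exact_mod_cast ht.ne'
    have n2 : (σ:ℂ) ≠ 0 := by exact_mod_cast hσ.ne'
    rw [Complex.real_smul]; push_cast; field_simp
  · filter_upwards [lt_mem_nhds hσ] with u hu
    exact Psi_Bf p (by positivity)

lemma pd2 {p : ℝ × ℝ} (h0 : 0 < p.1) (h2 : p.1 < 2) {s : ℝ} (hs : 0 < s) :
    HasDerivAt (fun u => Psi u p.2 s) (Bf p.1 (cB 2 p) s) p.1 := by
  have d1 : HasDerivAt (fun u : ℝ => -(|s| ^ u)) (-(s ^ p.1 * Real.log s)) p.1 := by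
    rw [abs_of_pos hs]
    exact ((hasDerivAt_id p.1).const_rpow hs).neg.congr_deriv (by simp; ring)
  have d2 : HasDerivAt (fun u : ℝ => p.2 * Tr u * (s * ell u s))
      (p.2 * Trd p.1 * (s * ell p.1 s) + p.2 * Tr p.1 * (s * emm p.1 s)) p.1 :=
    ((hasDerivAt_Tr h0 h2).const_mul p.2).mul ((hasDerivAt_ell_param p.1 s).const_mul s)
  unfold Psi
  refine (d1.ofReal_comp.add (d2.ofReal_comp.const_mul Complex.I)).congr_deriv ?_
  simp [Bf, cB]
  ring

lemma pd3 {p : ℝ × ℝ} {s : ℝ} :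
    HasDerivAt (fun u => Psi p.1 u s) (Bf p.1 (cB 3 p) s) p.2 := by
  have d2 : HasDerivAt (fun u : ℝ => u * Tr p.1 * (s * ell p.1 s))
      (Tr p.1 * (s * ell p.1 s)) p.2 := by
    simpa using ((hasDerivAt_id p.2).mul_const (Tr p.1)).mul_const (s * ell p.1 s)
  unfold Psi
  refine ((hasDerivAt_const p.2 (((-(|s| ^ p.1) : ℝ)) : ℂ)).add (d2.ofReal_comp.const_mul Complex.I)).congr_deriv ?_
  simp [Bf, cB]
  ring

noncomputable def Fi (θ : Fin 4 → ℝ) (x t : ℝ) : ℂ :=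
  kerf (x - θ 0) t * Complex.exp (Psi (θ 2) (θ 3) (θ 1 * t))

lemma pt_deriv {θ : Fin 4 → ℝ} (hθ : θ ∈ ThetaInt) (i : Fin 4) (x : ℝ) {t : ℝ} (ht : 0 < t) :
    HasDerivAt (fun u => Fi (Function.update θ i u) x t)
      ((kk i (θ 1) : ℂ) * (kerf (x - θ 0) t * Qf i (θ 2, θ 3) (θ 1 * t))) (θ i) := by
  obtain ⟨hσ, ⟨h0, h2⟩, -⟩ := hθ
  have hs : 0 < θ 1 * t := by positivity
  have eP := Psi_Bf (θ 2, θ 3) hs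
  simp only at eP
  unfold Fi Qf
  simp only [← eP]
  fin_cases i
  · refine ((pd0 x (θ 0) t).mul_const (Complex.exp (Psi (θ 2) (θ 3) (θ 1 * t)))).congr_deriv ?_ |>.congr_of_eventuallyEq
      (Eventually.of_forall fun u => ?_)
    · have n2 : ((θ 1 : ℝ):ℂ) ≠ 0 := by exact_mod_cast hσ.ne'
      simp [kk, Bf, cB]
      field_simp
    · simp [Function.update]
  · refine ((pd1 (p := (θ 2, θ 3)) hσ ht).cexp.const_mul (kerf (x - θ 0) t)).congr_deriv ?_ |>.congr_of_eventuallyEq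
      (Eventually.of_forall fun u => ?_)
    · simp [kk]
      ring
    · simp [Function.update]
  · refine ((pd2 (p := (θ 2, θ 3)) h0 h2 hs).cexp.const_mul (kerf (x - θ 0) t)).congr_deriv ?_ |>.congr_of_eventuallyEq
      (Eventually.of_forall fun u => ?_)
    · simp only [kk]
      simp
      left; ring
    · simp [Function.update]
  · refine ((pd3 (p := (θ 2, θ 3)) (s := θ 1 * t)).cexp.const_mul (kerf (x - θ 0) t)).congr_deriv ?_ |>.congr_of_eventuallyEq
      (Eventually.of_forall fun u => ?_)
    · simp only [kk]
      simp
      left; ring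
    · simp [Function.update]

lemma kk_contOn {i : Fin 4} {σ : ℝ} (hσ : 0 < σ) : ContinuousAt (kk i) σ := by
  have : ContinuousAt (fun s : ℝ => 1 / s) σ := continuousAt_const.div continuousAt_id hσ.ne'
  fin_cases i
  · exact this
  · exact this
  · exact continuousAt_const
  · exact continuousAt_const

lemma Theta_open : IsOpen ThetaInt := by
  have : ThetaInt = {θ : Fin 4 → ℝ | 0 < θ 1} ∩ ((fun θ : Fin 4 → ℝ => θ 2) ⁻¹' (Set.Ioo 0 2) ∩
    (fun θ : Fin 4 → ℝ => θ 3) ⁻¹' (Set.Ioo (-1) 1)) := rfl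
  rw [this]
  exact (isOpen_lt continuous_const (continuous_apply 1)).inter
    ((isOpen_Ioo.preimage (continuous_apply 2)).inter (isOpen_Ioo.preimage (continuous_apply 3)))

lemma dom_int {a σ : ℝ} (ha : 0 < a) (ha1 : a < 1) (hσ : 0 < σ) (C : ℝ) :
    IntegrableOn (fun t : ℝ => C * ((2 * σ * t) ^ a / (1 + (σ / 2 * t) ^ 2))) (Set.Ioi 0) := by
  obtain ⟨i0, -⟩ := K1_int (a := a + 1) (by linarith) (by linarith)
  rw [add_sub_cancel_right] at i0
  have := (integrableOn_Ioi_comp_mul_left_iff (fun v : ℝ => v ^ a / (1 + v ^ 2)) 0 (a := σ / 2) (by positivity)).2 (by simpa using i0)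
  have h2 := this.const_mul (C * 4 ^ a)
  refine IntegrableOn.congr_fun h2 (fun t ht => ?_) measurableSet_Ioi
  have ht : 0 < t := ht
  have : (2 * σ * t) = 4 * (σ / 2 * t) := by ring
  have e : (2 * σ * t) ^ a = 4 ^ a * (σ / 2 * t) ^ a := by
    rw [this]; exact Real.mul_rpow (by norm_num) (by positivity)
  rw [e]
  ring

lemma fM_deriv {θ : Fin 4 → ℝ} (hθ : θ ∈ ThetaInt) (i : Fin 4) (x : ℝ) :
    fP i θ x = kk i (θ 1) / (Real.pi * θ 1) * qq i (θ 2, θ 3) ((x - θ 0) / θ 1) := by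
  have hσ := hθ.1
  have h0 := hθ.2.1.1
  have h2 := hθ.2.1.2
  obtain ⟨a, ha, ha'⟩ := exists_between (lt_min one_pos h0)
  have ha1 := ha'.trans_le (min_le_left _ _)
  have ha2 := ha'.trans_le (min_le_right _ _)
  obtain ⟨C, hC, hev⟩ := upper_unif (p0 := (θ 2, θ 3)) ha ha1 ha2 h2 i
  have gc : Continuous (fun u => Function.update θ i u) := continuous_const.update i continuous_id
  have gθ : Function.update θ i (θ i) = θ := Function.update_eq_self i θ
  have gt : Tendsto (fun u => Function.update θ i u) (nhds (θ i)) (nhds θ) := by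
    have := gc.tendsto (θ i); rwa [gθ] at this
  have e1 : ∀ᶠ η : Fin 4 → ℝ in nhds θ, η ∈ ThetaInt := Theta_open.mem_nhds hθ
  have tp : Tendsto (fun η : Fin 4 → ℝ => (η 2, η 3)) (nhds θ) (nhds (θ 2, θ 3)) :=
    (Continuous.tendsto (by fun_prop) θ)
  have tσ : Tendsto (fun η : Fin 4 → ℝ => η 1) (nhds θ) (nhds (θ 1)) :=
    (Continuous.tendsto (by fun_prop) θ)
  have e2 := tp.eventually hev
  have e3 : ∀ᶠ η : Fin 4 → ℝ in nhds θ, θ 1 / 2 < η 1 := tσ.eventually_const_lt (by linarith)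
  have e4 : ∀ᶠ η : Fin 4 → ℝ in nhds θ, η 1 < 2 * θ 1 := tσ.eventually_lt_const (by linarith)
  have e5 : ∀ᶠ η : Fin 4 → ℝ in nhds θ, |kk i (η 1)| < |kk i (θ 1)| + 1 :=
    (((kk_contOn (i := i) hσ).tendsto.comp tσ).abs).eventually_lt_const (by linarith)
  have E := gt.eventually (e1.and (e2.and (e3.and (e4.and e5))))
  have meas : ∀ η ∈ ThetaInt, AEStronglyMeasurable (Fi η x) (volume.restrict (Set.Ioi 0)) := fun η hη =>
    ((continuous_ker _).mul (Complex.continuous_exp.comp ((Psi_cont hη.2.1.1 hη.2.1.2).comp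
      (continuous_const.mul continuous_id)))).aestronglyMeasurable
  have main := hasDerivAt_integral_of_dominated_loc_of_deriv_le (μ := volume.restrict (Set.Ioi (0:ℝ)))
    (F := fun u t => Fi (Function.update θ i u) x t) (x₀ := θ i)
    (F' := fun u t => (kk i (Function.update θ i u 1) : ℂ) * (kerf (x - Function.update θ i u 0) t *
      Qf i (Function.update θ i u 2, Function.update θ i u 3) (Function.update θ i u 1 * t)))
    (bound := fun t => (|kk i (θ 1)| + 1) * C * ((2 * θ 1 * t) ^ a / (1 + (θ 1 / 2 * t) ^ 2)))
    E (E.mono fun u hu => meas _ hu.1) ?_ ?_ ?_ ?_ ?_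
  · have hd := main.2
    simp only [gθ] at hd
    have hd2 := ((Complex.reCLM.hasFDerivAt.comp_hasDerivAt (θ i) hd).const_mul (1 / Real.pi))
    have hd3 : HasDerivAt (fun s => fM (Function.update θ i s) x) _ (θ i) :=
      hd2.congr_of_eventuallyEq (E.mono fun u hu => by
        show fM (Function.update θ i u) x = _
        rw [fM_half hu.1]; rfl)
    rw [fP, hd3.deriv]
    have := integral_comp_mul_left_Ioi (fun s => kerf ((x - θ 0) / θ 1) s * Qf i (θ 2, θ 3) s) 0 hσ
    simp only [← kerf_scale hσ.ne', mul_zero] at this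
    rw [integral_const_mul, this, qq]
    simp
    field_simp
  · simp only [gθ]
    refine (ker_integrable (G := fun t => Complex.exp (Psi (θ 2) (θ 3) (θ 1 * t))) ?_ _).integrableOn
    exact (exp_Psi_int (b := θ 3) h0 h2).comp_mul_left' hσ.ne'
  · simp only [gθ]
    refine ContinuousOn.aestronglyMeasurable ?_ measurableSet_Ioi
    refine continuousOn_const.mul ((continuous_ker _).continuousOn.mul ?_)
    exact (Qf_contOn i _).comp (by fun_prop) (fun t ht => mul_pos hσ ht)
  · refine (ae_restrict_mem measurableSet_Ioi).mono fun t ht u hu => ?_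
    obtain ⟨u1, u2, u3, u4, u5⟩ := hu
    have ht : 0 < t := ht
    have hs : 0 < Function.update θ i u 1 := u1.1
    rw [norm_mul, norm_mul, norm_ker, one_mul, Complex.norm_real, Real.norm_eq_abs, mul_assoc]
    have := u2.1 (Function.update θ i u 1 * t) (by positivity)
    refine mul_le_mul u5.le (this.trans ?_) (norm_nonneg _) (by positivity)
    gcongr
  · exact dom_int ha ha1 hσ _
  · refine (ae_restrict_mem measurableSet_Ioi).mono fun t ht u hu => ?_
    have := pt_deriv hu.1 i x ht
    simpa using this


lemma pow_dom {a : ℝ} (ha : 0 < a) (ha1 : a < 1) (C : ℝ) :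
    IntegrableOn (fun s : ℝ => C * (s ^ a / (1 + s ^ 2))) (Set.Ioi 0) := by
  obtain ⟨i0, -⟩ := K1_int (a := a + 1) (by linarith) (by linarith)
  rw [add_sub_cancel_right] at i0
  exact i0.const_mul C

lemma qq_meas {p : ℝ × ℝ} {a C : ℝ} (ha : 0 < a) (ha1 : a < 1) {i : Fin 4}
    (h : ∀ s, 0 < s → ‖Qf i p s‖ ≤ C * (s ^ a / (1 + s ^ 2))) : Continuous (qq i p) := by
  have hi : IntegrableOn (Qf i p) (Set.Ioi 0) :=
    Integrable.mono' (pow_dom ha ha1 C) ((Qf_contOn i p).aestronglyMeasurable measurableSet_Ioi)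
      ((ae_restrict_mem measurableSet_Ioi).mono fun s hs => h s hs)
  have hc := Complex.continuous_re.comp (FT_continuous ((integrable_indicator_iff measurableSet_Ioi).2 hi))
  refine hc.congr fun z => ?_
  simp only [Function.comp, qq, FT]
  rw [← integral_indicator measurableSet_Ioi]
  congr 2; ext t
  by_cases ht : t ∈ Set.Ioi (0:ℝ) <;> simp [ht]

lemma qq_cont {p0 : ℝ × ℝ} {a C : ℝ} (h0 : 0 < p0.1) (h2 : p0.1 < 2) (ha : 0 < a) (ha1 : a < 1) {i : Fin 4}
    (h : ∀ᶠ p in nhds p0, ∀ s, 0 < s → ‖Qf i p s‖ ≤ C * (s ^ a / (1 + s ^ 2))) (z : ℝ) :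
    ContinuousAt (fun p => qq i p z) p0 := by
  refine Complex.continuous_re.continuousAt.comp ?_
  refine continuousAt_of_dominated (bound := fun s => C * (s ^ a / (1 + s ^ 2))) (Eventually.of_forall fun p => ?_)
    (h.mono fun p hp => ?_) (pow_dom ha ha1 C) ?_
  · exact ((continuous_ker z).continuousOn.mul (Qf_contOn i p)).aestronglyMeasurable measurableSet_Ioi
  · refine (ae_restrict_mem measurableSet_Ioi).mono fun s hs => ?_
    rw [norm_mul, norm_ker, one_mul]; exact hp s hs
  · refine (ae_restrict_mem measurableSet_Ioi).mono fun s hs => ?_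
    exact continuousAt_const.mul (Qf_cont_param h0 h2 i hs)

lemma GG_cont {p0 : ℝ × ℝ} (h0 : 0 < p0.1) (h2 : p0.1 < 2) (z : ℝ) : ContinuousAt (fun p => GG p z) p0 := by
  refine Complex.continuous_re.continuousAt.comp ?_
  obtain ⟨D, hD0, hD⟩ := exp_rpow_bound (half_pos h0) 2
  have n3 : ∀ᶠ p : ℝ × ℝ in nhds p0, p0.1 / 2 < p.1 := continuousAt_fst.eventually_const_lt (by linarith)
  have n4 : ∀ᶠ p : ℝ × ℝ in nhds p0, p.1 < 2 := continuousAt_fst.eventually_lt_const h2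
  unfold FT
  refine continuousAt_of_dominated (bound := fun t => D * (1 / (1 + |t|) ^ 2)) ((n3.and n4).mono fun p hp => ?_)
    (n3.mono fun p hp => ?_) (int_inv_sq.const_mul D) ?_
  · exact (ker_integrable (exp_Psi_int (by linarith [hp.1]) hp.2) z).aestronglyMeasurable
  · refine Eventually.of_forall fun t => ?_
    rw [norm_mul, norm_ker, one_mul, exp_Psi_norm]
    refine (hD _ hp.le |t| (abs_nonneg t)).trans (le_of_eq ?_)
    ring
  · refine Eventually.of_forall fun t => ?_
    exact continuousAt_const.mul (Complex.continuous_exp.continuousAt.comp (Psi_cont_param h0 h2 t))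

noncomputable def HH (i j : Fin 4) (p : ℝ × ℝ) (z : ℝ) : ℝ := qq i p z * qq j p z / GG p z

lemma HH_main {p0 : ℝ × ℝ} (h0 : 0 < p0.1) (h2 : p0.1 < 2) (hb : |p0.2| < 1) (i j : Fin 4) :
    Integrable (HH i j p0) ∧ ContinuousAt (fun p => ∫ z, HH i j p z) p0 := by
  obtain ⟨A, hA, hA'⟩ := exists_between (show p0.1 < min 2 (2 * p0.1) from lt_min h2 (by linarith))
  have hA2 := hA'.trans_le (min_le_left _ _)
  have hA3 := hA'.trans_le (min_le_right _ _)
  obtain ⟨a, hlo, ha'⟩ := exists_between (show A / 2 < min 1 p0.1 from lt_min (by linarith) (by linarith))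
  have ha1 := ha'.trans_le (min_le_left _ _)
  have ha2 := ha'.trans_le (min_le_right _ _)
  have ha : 0 < a := by linarith
  obtain ⟨C, hC, hi⟩ := upper_unif (p0 := p0) ha ha1 ha2 h2 i
  obtain ⟨C', hC', hj⟩ := upper_unif (p0 := p0) ha ha1 ha2 h2 j
  obtain ⟨c, hc, hl⟩ := lower_unif (b0 := p0.2) h0 h2 hA hb
  have hl : ∀ᶠ p : ℝ × ℝ in nhds p0, ∀ z : ℝ, c * (1 + |z|) ^ (-(1 + A)) ≤ GG p z := hl
  have n4 : ∀ᶠ p : ℝ × ℝ in nhds p0, p.1 < 2 := continuousAt_fst.eventually_lt_const h2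
  have n3 : ∀ᶠ p : ℝ × ℝ in nhds p0, 0 < p.1 := continuousAt_fst.eventually_const_lt h0
  set bd : ℝ → ℝ := fun z => C * C' / c * (1 + ‖z‖) ^ (-(1 + 2 * a - A)) with hbd
  have ibd : Integrable bd := (integrable_one_add_norm (by simp; linarith)).const_mul _
  have E := hi.and (hj.and (hl.and (n3.and n4)))
  have meas : ∀ᶠ p in nhds p0, AEStronglyMeasurable (HH i j p) := E.mono fun p hp => by
    obtain ⟨e1, e2, e3, e4, e5⟩ := hp
    have m1 := (qq_meas ha ha1 e1.1).measurable
    have m2 := (qq_meas ha ha1 e2.1).measurable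
    have m3 : Measurable (GG p) :=
      (Complex.continuous_re.comp (FT_continuous (exp_Psi_int (b := p.2) e4 e5))).measurable
    exact ((m1.mul m2).div m3).aestronglyMeasurable
  have bound : ∀ᶠ p in nhds p0, ∀ z, ‖HH i j p z‖ ≤ bd z := E.mono fun p hp z => by
    obtain ⟨e1, e2, e3, e4, e5⟩ := hp
    have z1 : 0 < 1 + |z| := by positivity
    have lo : 0 < c * (1 + |z|) ^ (-(1 + A)) := by positivity
    have gp := lo.trans_le (e3 z)
    rw [HH, norm_div, norm_mul, Real.norm_eq_abs, Real.norm_eq_abs, Real.norm_of_nonneg gp.le]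
    calc |qq i p z| * |qq j p z| / GG p z
        ≤ (C * (1 + |z|) ^ (-(1 + a))) * (C' * (1 + |z|) ^ (-(1 + a))) / (c * (1 + |z|) ^ (-(1 + A))) := by
          have k1 := e1.2 z
          have k2 := e2.2 z
          have k3 := e3 z
          gcongr
      _ = C * C' / c * ((1 + |z|) ^ (-(1 + a)) * (1 + |z|) ^ (-(1 + a)) / (1 + |z|) ^ (-(1 + A))) := by
          field_simp
      _ = bd z := by
          rw [← Real.rpow_add z1, ← Real.rpow_sub z1]
          show _ = C * C' / c * (1 + |z|) ^ (-(1 + 2 * a - A))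
          congr 2; ring
  refine ⟨ibd.mono' meas.self_of_nhds (Eventually.of_forall bound.self_of_nhds), ?_⟩
  refine continuousAt_of_dominated meas (bound.mono fun p hp => Eventually.of_forall hp) ibd
    (Eventually.of_forall fun z => ?_)
  have gp : GG p0 z ≠ 0 := by
    have := hl.self_of_nhds z
    have lo : 0 < c * (1 + |z|) ^ (-(1 + A)) := by positivity
    exact (lo.trans_le this).ne'
  exact ((qq_cont h0 h2 ha ha1 (hi.mono fun p hp => hp.1) z).mul
    (qq_cont h0 h2 ha ha1 (hj.mono fun p hp => hp.1) z)).div (GG_cont h0 h2 z) gp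

noncomputable def Kc (i j : Fin 4) (σ : ℝ) : ℝ := kk i σ / (Real.pi * σ) * (kk j σ / (Real.pi * σ)) * (2 * Real.pi * σ)

lemma integrand_eq {θ : Fin 4 → ℝ} (hθ : θ ∈ ThetaInt) (i j : Fin 4) (x : ℝ) :
    fP i θ x * fP j θ x / fM θ x = Kc i j (θ 1) * HH i j (θ 2, θ 3) ((x - θ 0) / θ 1) := by
  rw [fM_deriv hθ, fM_deriv hθ, fM_GG hθ, Kc, HH]
  have := hθ.1.ne'
  have := Real.pi_pos.ne'
  simp only [div_eq_mul_inv, mul_inv, inv_inv, one_mul]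
  ring

lemma integral_eq {θ : Fin 4 → ℝ} (hθ : θ ∈ ThetaInt) (i j : Fin 4) :
    ∫ x, fP i θ x * fP j θ x / fM θ x = Kc i j (θ 1) * (θ 1 * ∫ z, HH i j (θ 2, θ 3) z) := by
  simp only [integrand_eq hθ]
  rw [integral_const_mul, integral_sub_right_eq_self (fun y => HH i j (θ 2, θ 3) (y / θ 1)),
    Measure.integral_comp_div, abs_of_pos hθ.1, smul_eq_mul]

/-- Every entry of the Fisher information matrix,
`I_{θᵢθⱼ}(θ) = ∫ f_{θᵢ} f_{θⱼ} / f dx`, is well-defined (the integrand is absolutely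
integrable) and is a continuous function of `θ` on `Θ_M°`. -/
theorem fisher_entries_finite_continuous :
    (∀ θ ∈ ThetaInt, ∀ i j : Fin 4,
      MeasureTheory.Integrable (fun x : ℝ => fP i θ x * fP j θ x / fM θ x)) ∧
    (∀ i j : Fin 4,
      ContinuousOn (fun θ : Fin 4 → ℝ => ∫ x : ℝ, fP i θ x * fP j θ x / fM θ x)
        ThetaInt) := by
  constructor
  · intro θ hθ i j
    simp only [integrand_eq hθ]
    have := (HH_main (p0 := (θ 2, θ 3)) hθ.2.1.1 hθ.2.1.2 (abs_lt.2 hθ.2.2) i j).1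
    exact ((this.comp_div hθ.1.ne').comp_sub_right (θ 0)).const_mul _
  · intro i j θ hθ
    refine ContinuousAt.continuousWithinAt ?_
    have hσ := hθ.1
    have h := (HH_main (p0 := (θ 2, θ 3)) hθ.2.1.1 hθ.2.1.2 (abs_lt.2 hθ.2.2) i j).2
    have tp : ContinuousAt (fun η : Fin 4 → ℝ => (η 2, η 3)) θ := by fun_prop
    have tσ : ContinuousAt (fun η : Fin 4 → ℝ => η 1) θ := (continuous_apply 1).continuousAt
    have hJ : ContinuousAt (fun η : Fin 4 → ℝ => ∫ z, HH i j (η 2, η 3) z) θ :=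
      ContinuousAt.comp (f := fun η : Fin 4 → ℝ => (η 2, η 3)) h tp
    have hk : ContinuousAt (Kc i j) (θ 1) := by
      have hp : ContinuousAt (fun s : ℝ => Real.pi * s) (θ 1) := by fun_prop
      have hn : Real.pi * θ 1 ≠ 0 := (mul_pos Real.pi_pos hσ).ne'
      exact (((kk_contOn hσ).div hp hn).mul ((kk_contOn hσ).div hp hn)).mul (by fun_prop)
    have hK : ContinuousAt (fun η : Fin 4 → ℝ => Kc i j (η 1)) θ :=
      ContinuousAt.comp (f := fun η : Fin 4 → ℝ => η 1) hk tσ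
    refine (hK.mul (tσ.mul hJ)).congr ?_
    filter_upwards [Theta_open.mem_nhds hθ] with η hη
    exact (integral_eq hη i j).symm
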